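/- arXiv:math/0205064 — 11 statements merged into one kernel-verified Lean document; each statement's English description precedes it below -/
import Mathlib

section
/- Let f : ℂ → ℂ be entire and let z1, z2 ∈ ℂ with z1 ≠ z2. Then for every z ∈ ℂ the two-point Taylor series of f at z1, z2 converges to f(z): the partial sums S_N(z) = Σ_{n=0}^{N−1} [a_n(z1,z2)(z−z1) + a_n(z2,z1)(z−z2)]·((z−z1)(z−z2))^n tend to f(z) as N → ∞. -/
/-- The two-point Taylor coefficient `a_n(z1, z2)` of `f` at the points `z1, z2`. -/
noncomputable def twoPointCoeff (f : ℂ → ℂ) (z1 z2 : ℂ) (n : ℕ) : ℂ :=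
  if n = 0 then f z2 / (z2 - z1)
  else ∑ k ∈ Finset.range (n + 1),
    ((Nat.factorial (n + k - 1) : ℂ) / ((Nat.factorial k : ℂ) * (Nat.factorial (n - k) : ℂ))) *
      (((-1 : ℂ) ^ (n + 1) * (n : ℂ) * iteratedDeriv (n - k) f z2
          + (-1 : ℂ) ^ k * (k : ℂ) * iteratedDeriv (n - k) f z1)
        / ((Nat.factorial n : ℂ) * (z1 - z2) ^ (n + k + 1)))

open Metric in
theorem tp_int {f : ℂ → ℂ} (hf : Continuous f) {R : ℝ} {g : ℂ → ℂ} (hR : 0 ≤ R)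
    (hg : ∀ w ∈ sphere (0:ℂ) R, ContinuousAt g w) :
    CircleIntegrable (fun w => f w * g w) 0 R :=
  ContinuousOn.circleIntegrable hR
    (fun w hw => (hf.continuousAt.mul (hg w hw)).continuousWithinAt)

theorem tp_sub_ne {R : ℝ} {a w : ℂ} (ha : ‖a‖ < R) (hw : w ∈ Metric.sphere (0:ℂ) R) :
    w - a ≠ 0 := by
  intro h
  rw [sub_eq_zero] at h
  subst h
  simp at hw
  linarith

theorem tp_J (a : ℂ) (R : ℝ) (ha : ‖a‖ < R) (n : ℕ) : ∀ f : ℂ → ℂ, Differentiable ℂ f →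
    (∮ w in C(0, R), f w * ((w - a) ^ (n + 1))⁻¹) =
      2 * Real.pi * Complex.I * (iteratedDeriv n f a / n.factorial) := by
  have hR : 0 ≤ R := (norm_nonneg a).trans ha.le
  induction n with
  | zero =>
    intro f hf
    have := (hf.differentiableOn (s := Metric.closedBall 0 R)).circleIntegral_sub_inv_smul
      (w := a) (by simpa using ha)
    simpa [mul_comm] using this
  | succ n ih =>
    intro f hf
    have h1 : (∮ w in C(0, R), (deriv f w * ((w - a) ^ (n + 1))⁻¹ -
        (n + 1) * (f w * ((w - a) ^ (n + 1 + 1))⁻¹))) = 0 := by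
      apply circleIntegral.integral_eq_zero_of_hasDerivWithinAt
        (f := fun w => f w * ((w - a) ^ (n + 1))⁻¹) hR
      intro w hw
      have hne := tp_sub_ne ha hw
      have h2 := (hf w).hasDerivAt.mul
        ((((hasDerivAt_id w).sub_const a).pow (n + 1)).inv (pow_ne_zero _ hne))
      refine HasDerivAt.hasDerivWithinAt (h2.congr_deriv ?_)
      simp
      field_simp
      ring
    rw [circleIntegral.integral_sub, ih _ hf.deriv, circleIntegral.integral_const_mul] at h1
    · rw [iteratedDeriv_succ', Nat.factorial_succ]
      push_cast
      have h3 : ((n : ℂ) + 1) ≠ 0 := by exact_mod_cast Nat.succ_ne_zero n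
      have h4 : (n.factorial : ℂ) ≠ 0 := by exact_mod_cast n.factorial_ne_zero
      apply mul_left_cancel₀ h3
      rw [← sub_eq_zero.mp h1]
      field_simp
    · apply tp_int hf.deriv.continuous hR
      intro w hw
      have hne := pow_ne_zero (n+1) (tp_sub_ne ha hw)
      fun_prop (disch := assumption)
    · have : CircleIntegrable (fun w => (n + 1 : ℂ) • (f w * ((w - a) ^ (n + 1 + 1))⁻¹)) 0 R := by
        apply CircleIntegrable.const_smul
        apply tp_int hf.continuous hR
        intro w hw
        have hne := pow_ne_zero (n+1+1) (tp_sub_ne ha hw)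
        fun_prop (disch := assumption)
      simpa using this

/-- partial fraction sum -/
noncomputable def tpT (D : ℕ → ℂ) (u : ℂ) (p q : ℕ) : ℂ :=
  ∑ j ∈ Finset.range p, (Nat.multichoose q j : ℂ) * (-1) ^ j * u ^ (q + j) * D (p - 1 - j)

theorem tpT_zero_left (D : ℕ → ℂ) (u : ℂ) (q : ℕ) : tpT D u 0 q = 0 := by simp [tpT]

theorem tpT_zero_right (D : ℕ → ℂ) (u : ℂ) (p : ℕ) : tpT D u (p + 1) 0 = D p := by
  rw [tpT, Finset.sum_range_succ']
  simp

theorem tpT_rec (D : ℕ → ℂ) (u : ℂ) (p q : ℕ) :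
    tpT D u (p + 1) (q + 1) = u * (tpT D u (p + 1) q - tpT D u p (q + 1)) := by
  simp only [tpT]
  rw [Finset.sum_range_succ', Finset.sum_range_succ' _ p, mul_sub, mul_add, Finset.mul_sum,
    Finset.mul_sum, add_sub_right_comm, ← Finset.sum_sub_distrib]
  congr 1
  · apply Finset.sum_congr rfl
    intro j hj
    rw [Nat.multichoose_succ_succ]
    have : p + 1 - 1 - (j + 1) = p - 1 - j := by omega
    rw [this]
    push_cast
    ring
  · simp
    ring

theorem tp_I (f : ℂ → ℂ) (hf : Differentiable ℂ f) (a b : ℂ) (hab : a ≠ b) (R : ℝ)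
    (ha : ‖a‖ < R) (hb : ‖b‖ < R) (p : ℕ) : ∀ q : ℕ,
    (∮ w in C(0, R), f w * (((w - a) ^ p)⁻¹ * ((w - b) ^ q)⁻¹)) =
      2 * Real.pi * Complex.I *
        (tpT (fun m => iteratedDeriv m f a / m.factorial) (1 / (a - b)) p q +
         tpT (fun m => iteratedDeriv m f b / m.factorial) (1 / (b - a)) q p) := by
  have hR : 0 ≤ R := (norm_nonneg a).trans ha.le
  induction p with
  | zero =>
    intro q
    cases q with
    | zero =>
      have := (hf.diffContOnCl (s := Metric.ball 0 R)).circleIntegral_eq_zero hR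
      simpa [tpT_zero_left] using this
    | succ q => simpa [tpT_zero_left, tpT_zero_right] using tp_J b R hb q f hf
  | succ p ihp =>
    intro q
    induction q with
    | zero => simpa [tpT_zero_left, tpT_zero_right] using tp_J a R ha p f hf
    | succ q ihq =>
      have hc : ∀ p q : ℕ, CircleIntegrable
          (fun w => f w * (((w - a) ^ p)⁻¹ * ((w - b) ^ q)⁻¹)) 0 R := by
        intro p q
        apply tp_int hf.continuous hR
        intro w hw
        have h1 := pow_ne_zero p (tp_sub_ne ha hw)
        have h2 := pow_ne_zero q (tp_sub_ne hb hw)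
        fun_prop (disch := assumption)
      have hab' : a - b ≠ 0 := sub_ne_zero.mpr hab
      have e : (∮ w in C(0, R), f w * (((w - a) ^ (p+1))⁻¹ * ((w - b) ^ (q+1))⁻¹)) =
          ∮ w in C(0, R), (1 / (a - b)) * (f w * (((w - a) ^ (p+1))⁻¹ * ((w - b) ^ q)⁻¹) -
            f w * (((w - a) ^ p)⁻¹ * ((w - b) ^ (q+1))⁻¹)) := by
        apply circleIntegral.integral_congr hR
        intro w hw
        have h1 := tp_sub_ne ha hw
        have h2 := tp_sub_ne hb hw
        simp only
        field_simp
        ring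
      rw [e, circleIntegral.integral_const_mul, circleIntegral.integral_sub (hc _ _) (hc _ _),
        ihp, ihq, tpT_rec, tpT_rec]
      have : 1 / (b - a) = - (1 / (a - b)) := by rw [← neg_sub a b, div_neg]
      rw [this]
      ring

theorem tp_coeff (f : ℂ → ℂ) (a b : ℂ) (hab : a ≠ b) (n : ℕ) :
    twoPointCoeff f a b n * (b - a) =
        tpT (fun m => iteratedDeriv m f a / m.factorial) (1 / (a - b)) n (n + 1) +
         tpT (fun m => iteratedDeriv m f b / m.factorial) (1 / (b - a)) (n + 1) n := by
  have hab' : a - b ≠ 0 := sub_ne_zero.mpr hab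
  have hba' : b - a ≠ 0 := sub_ne_zero.mpr hab.symm
  cases n with
  | zero =>
    rw [tpT_zero_left, tpT_zero_right]
    simp [twoPointCoeff, hba']
  | succ m =>
    have key : ∀ q j : ℕ, (Nat.multichoose (q + 1) j : ℂ) =
        ((q + j).factorial : ℂ) / (j.factorial * q.factorial) := by
      intro q j
      rw [Nat.multichoose_eq, show q + 1 + j - 1 = j + q by omega, Nat.cast_add_choose,
        add_comm j q]
    have hfac : ∀ k : ℕ, (k.factorial : ℂ) ≠ 0 := fun k => by exact_mod_cast k.factorial_ne_zero
    have hs : 1 / (b - a) = - (1 / (a - b)) := by rw [← neg_sub a b, div_neg]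
    rw [twoPointCoeff, if_neg (Nat.succ_ne_zero m), Finset.sum_mul]
    rw [hs]
    have hb : b - a = -(a - b) := by ring
    rw [hb]
    generalize a - b = d at *
    have split : ∀ k ∈ Finset.range (m + 1 + 1),
        ((Nat.factorial (m + 1 + k - 1) : ℂ) /
          ((Nat.factorial k : ℂ) * (Nat.factorial (m + 1 - k) : ℂ))) *
        (((-1 : ℂ) ^ (m + 1 + 1) * ((m + 1 : ℕ) : ℂ) * iteratedDeriv (m + 1 - k) f b
          + (-1 : ℂ) ^ k * (k : ℂ) * iteratedDeriv (m + 1 - k) f a)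
        / ((Nat.factorial (m + 1) : ℂ) * d ^ (m + 1 + k + 1))) * (-d) =
        ((Nat.factorial (m + k) : ℂ) /
          ((Nat.factorial k : ℂ) * (Nat.factorial (m + 1 - k) : ℂ))) *
          ((-1) ^ (k + 1) * k * iteratedDeriv (m + 1 - k) f a)
            / ((Nat.factorial (m + 1) : ℂ) * d ^ (m + 1 + k)) +
        (Nat.multichoose (m + 1) k : ℂ) * (-1) ^ k * (-(1 / d)) ^ (m + 1 + k) *
          (iteratedDeriv (m + 1 - k) f b / (m + 1 - k).factorial) := by
      intro k hk
      rw [key, show m + 1 + k - 1 = m + k by omega]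
      have h1 := hfac k
      have h2 := hfac (m + 1 - k)
      have h3 := hfac m
      have h4 : ((m : ℂ) + 1) ≠ 0 := by exact_mod_cast Nat.succ_ne_zero m
      have h5 : ((-1 : ℂ)) ^ k * (-1) ^ k = 1 := by rw [← mul_pow]; simp
      rw [neg_pow (1 / d), Nat.factorial_succ, pow_add (-1 : ℂ) (m + 1) k, one_div, inv_pow]
      have h6 : ∀ x : ℂ, x * (-1 : ℂ) ^ k * ((-1) ^ (m + 1) * (-1) ^ k * (d ^ (m + 1 + k))⁻¹) =
        x * ((-1) ^ k * (-1) ^ k) * ((-1) ^ (m + 1) * (d ^ (m + 1 + k))⁻¹) := fun x => by ring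
      rw [h6]
      rw [h5]
      push_cast
      field_simp
      ring
    rw [Finset.sum_congr rfl split, Finset.sum_add_distrib]
    congr 1
    rw [Finset.sum_range_succ', tpT]
    simp only [Nat.cast_zero, mul_zero, zero_mul, zero_div, add_zero]
    apply Finset.sum_congr rfl
    intro j hj
    rw [key, show m + 1 - (j + 1) = m + 1 - 1 - j by omega, Nat.factorial_succ j,
      show m + (j + 1) = m + 1 + j by omega]
    have h1 := hfac j
    have h2 := hfac (m + 1 - 1 - j)
    have h3 := hfac (m + 1)
    have h4 : ((j : ℂ) + 1) ≠ 0 := by exact_mod_cast Nat.succ_ne_zero j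
    rw [one_div, inv_pow]
    push_cast
    field_simp
    ring

theorem tp_partial (f : ℂ → ℂ) (hf : Differentiable ℂ f) (z1 z2 z : ℂ) (h12 : z1 ≠ z2) (R : ℝ)
    (h1 : ‖z1‖ < R) (h2 : ‖z2‖ < R) (h3 : ‖z‖ < R) (N : ℕ) :
    2 * Real.pi * Complex.I * (f z - ∑ n ∈ Finset.range N,
        (twoPointCoeff f z1 z2 n * (z - z1) + twoPointCoeff f z2 z1 n * (z - z2)) *
          ((z - z1) * (z - z2)) ^ n) =
    ∮ w in C(0, R), f w * ((w - z)⁻¹ *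
      (((z - z1) * (z - z2)) * ((w - z1) * (w - z2))⁻¹) ^ N) := by
  have hR : 0 ≤ R := (norm_nonneg z1).trans h1.le
  induction N with
  | zero =>
    have := tp_J z R h3 0 f hf
    simpa using this.symm
  | succ N ih =>
    have hc : ∀ N : ℕ, CircleIntegrable (fun w => f w * ((w - z)⁻¹ *
      (((z - z1) * (z - z2)) * ((w - z1) * (w - z2))⁻¹) ^ N)) 0 R := by
      intro N
      apply tp_int hf.continuous hR
      intro w hw
      have e1 := tp_sub_ne h3 hw
      have e2 := mul_ne_zero (tp_sub_ne h1 hw) (tp_sub_ne h2 hw)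
      fun_prop (disch := assumption)
    have hc2 : ∀ p q : ℕ, ∀ a b c : ℂ, ‖a‖ < R → ‖b‖ < R → CircleIntegrable
        (fun w => c * (f w * (((w - a) ^ p)⁻¹ * ((w - b) ^ q)⁻¹))) 0 R := by
      intro p q a b c ha hb
      refine CircleIntegrable.const_smul (a := c) ?_
      apply tp_int hf.continuous hR
      intro w hw
      have h1 := pow_ne_zero p (tp_sub_ne ha hw)
      have h2 := pow_ne_zero q (tp_sub_ne hb hw)
      fun_prop (disch := assumption)
    have d1 : z1 - z2 ≠ 0 := sub_ne_zero.mpr h12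
    have d2 : z2 - z1 ≠ 0 := sub_ne_zero.mpr h12.symm
    have i1 := tp_I f hf z1 z2 h12 R h1 h2 N (N + 1)
    have i2 := tp_I f hf z2 z1 h12.symm R h2 h1 N (N + 1)
    rw [← tp_coeff f _ _ h12] at i1
    rw [← tp_coeff f _ _ h12.symm] at i2
    rw [Finset.sum_range_succ, ← sub_sub, mul_sub, ih, sub_eq_iff_eq_add', ← sub_eq_iff_eq_add,
      ← circleIntegral.integral_sub (hc _) (hc _)]
    have e : 2 * Real.pi * Complex.I * ((twoPointCoeff f z1 z2 N * (z - z1) +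
        twoPointCoeff f z2 z1 N * (z - z2)) * ((z - z1) * (z - z2)) ^ N) =
        ((z - z1) / (z2 - z1) * ((z - z1) * (z - z2)) ^ N) *
          (2 * Real.pi * Complex.I * (twoPointCoeff f z1 z2 N * (z2 - z1))) +
        ((z - z2) / (z1 - z2) * ((z - z1) * (z - z2)) ^ N) *
          (2 * Real.pi * Complex.I * (twoPointCoeff f z2 z1 N * (z1 - z2))) := by
      field_simp
    rw [e, ← i1, ← i2, ← circleIntegral.integral_const_mul, ← circleIntegral.integral_const_mul,
      ← circleIntegral.integral_add (hc2 _ _ _ _ _ h1 h2) (hc2 _ _ _ _ _ h2 h1)]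
    apply circleIntegral.integral_congr hR
    intro w hw
    have e1 := tp_sub_ne h3 hw
    have e2 := tp_sub_ne h1 hw
    have e3 := tp_sub_ne h2 hw
    have d3 : z1 - z2 = -(z2 - z1) := by ring
    simp only [mul_pow, inv_pow, mul_inv, pow_succ]
    rw [d3, div_neg]
    generalize hA : (z - z1) ^ N = A
    generalize hB : (z - z2) ^ N = B
    have e4 := pow_ne_zero N e2
    have e5 := pow_ne_zero N e3
    generalize (w - z1) ^ N = P at *
    generalize (w - z2) ^ N = Q at *
    field_simp
    ring

/-- The two-point Taylor expansion of an entire function converges everywhere. -/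
theorem twoPointTaylor_tendsto_of_entire
    (f : ℂ → ℂ) (hf : Differentiable ℂ f)
    (z1 z2 : ℂ) (h12 : z1 ≠ z2) (z : ℂ) :
    Filter.Tendsto
      (fun N : ℕ => ∑ n ∈ Finset.range N,
        (twoPointCoeff f z1 z2 n * (z - z1) + twoPointCoeff f z2 z1 n * (z - z2)) *
          ((z - z1) * (z - z2)) ^ n)
      Filter.atTop (nhds (f z)) := by
  obtain ⟨R, hRdef⟩ : ∃ R : ℝ, R = 2 * ‖z‖ + 3 * ‖z1‖ + 3 * ‖z2‖ + 1 := ⟨_, rfl⟩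
  have n0 := norm_nonneg z
  have n1 := norm_nonneg z1
  have n2 := norm_nonneg z2
  have hR : 0 < R := by linarith
  have h1 : ‖z1‖ < R := by linarith
  have h2 : ‖z2‖ < R := by linarith
  have h3 : ‖z‖ < R := by linarith
  obtain ⟨M, hM⟩ := (isCompact_sphere (0:ℂ) R).exists_bound_of_continuousOn
    hf.continuous.continuousOn
  have bound : ∀ N : ℕ, ‖∮ w in C(0, R), f w * ((w - z)⁻¹ *
      (((z - z1) * (z - z2)) * ((w - z1) * (w - z2))⁻¹) ^ N)‖ ≤
      2 * Real.pi * R * (M * (1 / 2) ^ N) := by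
    intro N
    apply circleIntegral.norm_integral_le_of_norm_le_const hR.le
    intro w hw
    have hwn : ‖w‖ = R := by simpa using hw
    have m0 : (1:ℝ) ≤ ‖w - z‖ := by have := norm_sub_norm_le w z; linarith
    have m1 : 2 * ‖z - z1‖ ≤ ‖w - z1‖ := by
      have := norm_sub_norm_le w z1
      have := norm_sub_le z z1
      linarith
    have m2 : 2 * ‖z - z2‖ ≤ ‖w - z2‖ := by
      have := norm_sub_norm_le w z2
      have := norm_sub_le z z2
      linarith
    have p1 : 0 < ‖w - z1‖ := norm_pos_iff.mpr (tp_sub_ne h1 hw)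
    have p2 : 0 < ‖w - z2‖ := norm_pos_iff.mpr (tp_sub_ne h2 hw)
    have hM0 : 0 ≤ M := (norm_nonneg _).trans (hM w hw)
    have q : ‖((z - z1) * (z - z2)) * ((w - z1) * (w - z2))⁻¹‖ ≤ 1 / 2 := by
      rw [norm_mul, norm_inv, norm_mul, norm_mul, ← div_eq_mul_inv, div_le_iff₀ (by positivity)]
      have := mul_le_mul m1 m2 (by positivity) p1.le
      nlinarith [mul_pos p1 p2]
    rw [norm_mul, norm_mul, norm_pow, norm_inv]
    have q2 := pow_le_pow_left₀ (norm_nonneg _) q N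
    have q3 : ‖w - z‖⁻¹ ≤ 1 := inv_le_one_of_one_le₀ m0
    refine mul_le_mul (hM w hw) ?_ (by positivity) hM0
    calc _ ≤ 1 * (1 / 2 : ℝ) ^ N := mul_le_mul q3 q2 (by positivity) (by norm_num)
      _ = _ := one_mul _
  have lim : Filter.Tendsto (fun N : ℕ => R * (M * (1 / 2 : ℝ) ^ N)) Filter.atTop (nhds 0) := by
    have := tendsto_pow_atTop_nhds_zero_of_lt_one (r := (1 / 2 : ℝ)) (by norm_num) (by norm_num)
    simpa using (this.const_mul M).const_mul R
  rw [tendsto_iff_norm_sub_tendsto_zero]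
  refine squeeze_zero (fun _ => norm_nonneg _) (fun N => ?_) lim
  have hb := bound N
  rw [← tp_partial f hf z1 z2 z h12 R h1 h2 h3 N, norm_mul, norm_sub_rev] at hb
  have hpi : ‖(2 * Real.pi * Complex.I : ℂ)‖ = 2 * Real.pi := by
    simp [abs_of_pos Real.pi_pos]
  rw [hpi, mul_assoc (2 * Real.pi)] at hb
  exact le_of_mul_le_mul_left hb (by positivity)
end

section
/- Let z1 ≠ z2 be complex numbers and let f : ℂ → ℂ be analytic at z1 and at z2. Then for every n ≥ 1, (1/(z2−z1)) · [ (1/(n−1)!) · D^{n−1}( w ↦ f(w)/(w−z2)^{n+1} )(z1) + (1/n!) · D^{n}( w ↦ f(w)/(w−z1)^{n} )(z2) ] = Σ_{k=0}^{n} ((n+k−1)!/(k!(n−k)!)) · ((−1)^{n+1}·n·f^{(n−k)}(z2) + (−1)^k·k·f^{(n−k)}(z1)) / (n!·(z1−z2)^{n+k+1}), where D^{j}h(a) denotes the j-th iterated derivative of h at a. -/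
lemma iteratedDeriv_inv_pow_aux (b : ℂ) (m k : ℕ) : ∀ a : ℂ, a ≠ b →
    iteratedDeriv k (fun w => ((w - b) ^ (m + 1))⁻¹) a
      = (-1) ^ k * ((m + k).factorial : ℂ) / (m.factorial : ℂ) / (a - b) ^ (m + 1 + k) := by
  have hm : (m.factorial : ℂ) ≠ 0 := by exact_mod_cast m.factorial_ne_zero
  induction k with
  | zero => intro a h; simp [hm]
  | succ k ih =>
    intro a h
    have hab : a - b ≠ 0 := sub_ne_zero.2 h
    rw [iteratedDeriv_succ]
    have he : iteratedDeriv k (fun w => ((w - b) ^ (m + 1))⁻¹) =ᶠ[nhds a]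
        fun a => (-1) ^ k * ((m + k).factorial : ℂ) / (m.factorial : ℂ) / (a - b) ^ (m + 1 + k) := by
      filter_upwards [isOpen_ne.mem_nhds h] with x hx using ih x hx
    rw [he.deriv_eq]
    have hd : HasDerivAt (fun x : ℂ => (x - b) ^ (m + 1 + k))
        (((m + 1 + k : ℕ) : ℂ) * (a - b) ^ (m + k) * 1) a := by
      have := ((hasDerivAt_id a).sub_const b).pow (m + 1 + k)
      have e : m + 1 + k - 1 = m + k := by omega
      rw [e] at this
      exact this
    have h2 := (hasDerivAt_const a ((-1) ^ k * ((m + k).factorial : ℂ) / (m.factorial : ℂ))).fun_div hd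
      (pow_ne_zero _ hab)
    rw [h2.deriv]
    have e2 : m + (k + 1) = (m + k) + 1 := by omega
    rw [e2, Nat.factorial_succ]
    push_cast
    field_simp
    ring

lemma iteratedDeriv_div_pow_aux (f : ℂ → ℂ) (a b : ℂ) (h : a ≠ b) (hf : AnalyticAt ℂ f a)
    (N m : ℕ) :
    iteratedDeriv N (fun w => f w / (w - b) ^ (m + 1)) a
      = ∑ k ∈ Finset.range (N + 1), (N.choose k : ℂ) *
        ((-1) ^ k * ((m + k).factorial : ℂ) / (m.factorial : ℂ) / (a - b) ^ (m + 1 + k)) *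
        iteratedDeriv (N - k) f a := by
  have hab : a - b ≠ 0 := sub_ne_zero.2 h
  have e : (fun w => f w / (w - b) ^ (m + 1)) = (fun w => ((w - b) ^ (m + 1))⁻¹) * f := by
    ext w; simp [div_eq_mul_inv, mul_comm]
  have hg : ContDiffAt ℂ N (fun w => ((w - b) ^ (m + 1))⁻¹) a := by
    apply ContDiffAt.inv
    · fun_prop
    · exact pow_ne_zero _ hab
  rw [e, iteratedDeriv_mul hg hf.contDiffAt]
  refine Finset.sum_congr rfl fun k _ => ?_
  rw [iteratedDeriv_inv_pow_aux b m k a h]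


/-- Explicit formula for the two-point Taylor coefficients `a_n(z1,z2)`, `n ≥ 1`:
the sum of the residues at `z1` and `z2` of `f(w)/((w−z1)^n (w−z2)^{n+1})`,
divided by `(z2−z1)`, equals the explicit finite double sum. -/
theorem twoPointCoeff_eq_residue_sum
    (f : ℂ → ℂ) (z1 z2 : ℂ) (h12 : z1 ≠ z2)
    (hf1 : AnalyticAt ℂ f z1) (hf2 : AnalyticAt ℂ f z2)
    (n : ℕ) (hn : 1 ≤ n) :
    (1 / (z2 - z1)) *
      ((1 / (Nat.factorial (n - 1) : ℂ)) *
          iteratedDeriv (n - 1) (fun w => f w / (w - z2) ^ (n + 1)) z1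
        + (1 / (Nat.factorial n : ℂ)) *
          iteratedDeriv n (fun w => f w / (w - z1) ^ n) z2)
    = ∑ k ∈ Finset.range (n + 1),
        ((Nat.factorial (n + k - 1) : ℂ) / ((Nat.factorial k : ℂ) * (Nat.factorial (n - k) : ℂ))) *
          (((-1 : ℂ) ^ (n + 1) * (n : ℂ) * iteratedDeriv (n - k) f z2
              + (-1 : ℂ) ^ k * (k : ℂ) * iteratedDeriv (n - k) f z1)
            / ((Nat.factorial n : ℂ) * (z1 - z2) ^ (n + k + 1))) := by
  obtain ⟨m, rfl⟩ : ∃ m, n = m + 1 := ⟨n - 1, by omega⟩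
  have h1 : z1 - z2 ≠ 0 := sub_ne_zero.2 h12
  have e0 : z2 - z1 = -(z1 - z2) := by ring
  have hF : ∀ j : ℕ, (j.factorial : ℂ) ≠ 0 := fun j => by exact_mod_cast j.factorial_ne_zero
  have hc : ∀ N k : ℕ, k ≤ N → (N.choose k : ℂ) =
      (N.factorial : ℂ) / ((k.factorial : ℂ) * ((N - k).factorial : ℂ)) :=
    fun N k h => Nat.cast_choose ℂ h
  have hm1 : ((m : ℂ) + 1) ≠ 0 := by exact_mod_cast Nat.succ_ne_zero m
  have hs : ∀ j : ℕ, ((-1 : ℂ) ^ j) * (-1) ^ j = 1 := fun j => by rw [← mul_pow]; simp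
  rw [iteratedDeriv_div_pow_aux f z1 z2 h12 hf1, iteratedDeriv_div_pow_aux f z2 z1 h12.symm hf2]
  simp only [Nat.add_sub_cancel]
  generalize hd : z1 - z2 = d at *
  rw [mul_add, e0]
  simp only [mul_add, add_div, Finset.sum_add_distrib]
  rw [add_comm]
  congr 1
  · simp only [Finset.mul_sum]
    refine Finset.sum_congr rfl fun k hk => ?_
    have hk' : k ≤ m + 1 := by simpa [Nat.lt_succ_iff] using hk
    have e3 : m + 1 + k - 1 = m + k := by omega
    rw [hc _ _ hk', e3]
    have := hF k; have := hF (m + 1 - k); have := hF m; have := hF (m + k)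
    rw [Nat.factorial_succ, neg_pow d]
    push_cast
    have hs1 : ((-1 : ℂ) ^ (m + 1 + k))⁻¹ = (-1) ^ (m + 1) * (-1) ^ k := by
      rw [← pow_add]; exact inv_eq_of_mul_eq_one_left (hs _)
    have hs2 := hs k
    rw [div_mul_eq_div_div _ ((-1 : ℂ) ^ (m + 1 + k)), div_eq_mul_inv _ ((-1 : ℂ) ^ (m + 1 + k)), hs1]
    field_simp
    linear_combination (iteratedDeriv (m + 1 - k) f z2 * d ^ 2 * d ^ k * d ^ m * (-1 : ℂ) ^ m) * hs2
  · rw [Finset.sum_range_succ' _ (m + 1)]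
    simp only [Finset.mul_sum, Nat.cast_zero, mul_zero, zero_mul, zero_div, add_zero]
    refine Finset.sum_congr rfl fun k hk => ?_
    have hk' : k ≤ m := by simpa [Nat.lt_succ_iff] using hk
    have e3 : m + 1 + (k + 1) - 1 = m + 1 + k := by omega
    have e4 : m + 1 - (k + 1) = m - k := by omega
    rw [hc _ _ hk', e3, e4]
    have := hF k; have := hF (m - k); have := hF m; have := hF (m + 1)
    have : ((k : ℂ) + 1) ≠ 0 := by exact_mod_cast Nat.succ_ne_zero k
    rw [Nat.factorial_succ k]
    push_cast
    field_simp
    ring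
end

section
/- Let x1 ≠ x2 be real numbers, n ≥ 1, and let f : ℝ → ℝ be (n−1)-times continuously differentiable on a neighborhood of x1 and on a neighborhood of x2. Let P_n(x) = Σ_{k=0}^{n−1} [a_k(x1,x2)(x−x1) + a_k(x2,x1)(x−x2)]·((x−x1)(x−x2))^k be the two-point Taylor polynomial and set r_n(x) = f(x) − P_n(x). Then r_n(x) = o((x−x1)^{n−1}) as x → x1 and r_n(x) = o((x−x2)^{n−1}) as x → x2. -/
/-- The two-point Taylor coefficient `a_k(x1, x2)` of a real function `f` at `x1, x2`. -/
noncomputable def twoPointCoeffR (f : ℝ → ℝ) (x1 x2 : ℝ) (k : ℕ) : ℝ :=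
  if k = 0 then f x2 / (x2 - x1)
  else ∑ j ∈ Finset.range (k + 1),
    ((Nat.factorial (k + j - 1) : ℝ) / ((Nat.factorial j : ℝ) * (Nat.factorial (k - j) : ℝ))) *
      (((-1 : ℝ) ^ (k + 1) * (k : ℝ) * iteratedDeriv (k - j) f x2
          + (-1 : ℝ) ^ j * (j : ℝ) * iteratedDeriv (k - j) f x1)
        / ((Nat.factorial k : ℝ) * (x1 - x2) ^ (k + j + 1)))

noncomputable def tpS (c : ℕ → ℝ) (d : ℝ) (p q : ℕ) : ℝ :=
  ∑ j ∈ Finset.range p, c (p - 1 - j) * (-1) ^ j * ((q + j - 1).choose j : ℝ) * (d⁻¹) ^ (q + j)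

theorem tpS_rec (c : ℕ → ℝ) (d : ℝ) (hd : d ≠ 0) (p q : ℕ) :
    d * tpS c d (p + 1) (q + 1) = tpS c d (p + 1) q - tpS c d p (q + 1) := by
  unfold tpS
  rw [Finset.sum_range_succ', Finset.sum_range_succ', mul_add, Finset.mul_sum,
    add_sub_right_comm, ← Finset.sum_sub_distrib]
  congr 1
  · apply Finset.sum_congr rfl
    intro j hj
    have h1 : p + 1 - 1 - (j + 1) = p - 1 - j := by omega
    have h2 : q + 1 + (j + 1) - 1 = (q + j) + 1 := by omega
    have h3 : q + (j + 1) - 1 = q + j := by omega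
    have h4 : q + 1 + j - 1 = q + j := by omega
    rw [h1, h2, h3, h4, Nat.choose_succ_succ]
    push_cast
    have h5 : d * (d⁻¹) ^ (q + 1 + (j + 1)) = (d⁻¹) ^ (q + (j + 1)) := by
      rw [show q + 1 + (j + 1) = (q + (j + 1)) + 1 by omega, pow_succ]
      field_simp
    have h6 : (d⁻¹) ^ (q + 1 + j) = (d⁻¹) ^ (q + (j + 1)) := by
      rw [show q + 1 + j = q + (j + 1) by omega]
    rw [h6]
    linear_combination (c (p - 1 - j) * (-1) ^ (j + 1) * ((q + j).choose j + (q + j).choose (j + 1))) * h5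
  · simp
    rw [pow_succ]
    field_simp

noncomputable def tpG (c e : ℕ → ℝ) (d : ℝ) (p q : ℕ) : ℝ := tpS c d p q + tpS e (-d) q p

theorem tpG_rec (c e : ℕ → ℝ) (d : ℝ) (hd : d ≠ 0) (p q : ℕ) :
    d * tpG c e d (p + 1) (q + 1) = tpG c e d (p + 1) q - tpG c e d p (q + 1) := by
  have h1 := tpS_rec c d hd p q
  have h2 := tpS_rec e (-d) (neg_ne_zero.2 hd) q p
  unfold tpG
  linear_combination h1 - h2

theorem tpG_zero (c e : ℕ → ℝ) (d : ℝ) (p : ℕ) : tpG c e d (p + 1) 0 = c p := by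
  unfold tpG tpS
  rw [Finset.sum_range_succ']
  simp

noncomputable def tpR (c e : ℕ → ℝ) (d : ℝ) (p q : ℕ) : PowerSeries ℝ :=
  PowerSeries.mk fun i => tpG c e d (p + 1 + i) q

theorem tpR_succ (c e : ℕ → ℝ) (d : ℝ) (p q : ℕ) :
    tpR c e d p q = PowerSeries.C (tpG c e d (p + 1) q) + PowerSeries.X * tpR c e d (p + 1) q := by
  ext i
  cases i with
  | zero => simp [tpR]
  | succ i =>
    simp only [tpR, PowerSeries.coeff_mk, map_add, PowerSeries.coeff_succ_X_mul,
      PowerSeries.coeff_C]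
    simp
    congr 1; omega

theorem tpR_mul (c e : ℕ → ℝ) (d : ℝ) (hd : d ≠ 0) (p q : ℕ) :
    tpR c e d p q = PowerSeries.C (tpG c e d p (q + 1)) +
      (PowerSeries.X + PowerSeries.C d) * tpR c e d p (q + 1) := by
  ext i
  rw [add_mul]
  cases i with
  | zero =>
    have := tpG_rec c e d hd p q
    simp [tpR]
    linarith
  | succ i =>
    have := tpG_rec c e d hd (p + 1 + i) q
    simp only [tpR, PowerSeries.coeff_mk, map_add, PowerSeries.coeff_succ_X_mul,
      PowerSeries.coeff_C, PowerSeries.coeff_C_mul]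
    simp
    simp only [add_assoc] at this ⊢
    linarith

theorem tpR_newton (c e : ℕ → ℝ) (d : ℝ) (hd : d ≠ 0) (n : ℕ) :
    PowerSeries.mk c = ∑ k ∈ Finset.range n,
      (PowerSeries.C (tpG c e d (k + 1) k) + PowerSeries.X * PowerSeries.C (tpG c e d (k + 1) (k + 1)))
        * (PowerSeries.X * (PowerSeries.X + PowerSeries.C d)) ^ k
      + (PowerSeries.X * (PowerSeries.X + PowerSeries.C d)) ^ n * tpR c e d n n := by
  induction n with
  | zero =>
    simp only [Finset.range_zero, Finset.sum_empty, pow_zero, zero_add, one_mul]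
    ext i
    simp only [tpR, PowerSeries.coeff_mk, zero_add]
    rw [add_comm, tpG_zero]
  | succ n ih =>
    rw [Finset.sum_range_succ]
    refine ih.trans ?_
    have h1 := tpR_succ c e d n n
    have h2 := tpR_mul c e d hd (n + 1) n
    rw [h2] at h1
    rw [h1]
    ring

theorem tp_coeff_s4 (f : ℝ → ℝ) (x1 x2 : ℝ) (h : x1 ≠ x2) (k : ℕ) :
    twoPointCoeffR f x1 x2 k = - tpG (fun i => iteratedDeriv i f x1 / (i.factorial : ℝ))
      (fun i => iteratedDeriv i f x2 / (i.factorial : ℝ)) (x1 - x2) k (k + 1) / (x1 - x2) := by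
  have hd : x1 - x2 ≠ 0 := sub_ne_zero.2 h
  unfold twoPointCoeffR
  split_ifs with hk
  · subst hk
    simp [tpG, tpS]
    rw [← neg_sub x1 x2]
    field_simp
  · obtain ⟨m, rfl⟩ := Nat.exists_eq_succ_of_ne_zero hk
    simp only [Nat.succ_eq_add_one]
    generalize x1 - x2 = d at hd
    unfold tpG tpS
    simp only [add_div, mul_add, Finset.sum_add_distrib, neg_add]
    rw [add_comm]
    congr 1
    · rw [Finset.sum_range_succ', ← Finset.sum_neg_distrib, Finset.sum_div]
      simp only [Nat.cast_zero, mul_zero, zero_mul, zero_div, add_zero]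
      apply Finset.sum_congr rfl
      intro j hj
      have hj := Finset.mem_range.1 hj
      rw [show m + 1 + (j + 1) - 1 = m + 1 + j by omega,
        show m + 1 + 1 + j - 1 = m + 1 + j by omega,
        show m + 1 - 1 - j = m + 1 - (j + 1) by omega, 
        Nat.cast_choose ℝ (show j ≤ m + 1 + j by omega), show m + 1 + j - j = m + 1 by omega,
        Nat.factorial_succ j, inv_pow]
      have a1 := Nat.factorial_ne_zero j
      have a2 := Nat.factorial_ne_zero (m + 1)
      have a3 := Nat.factorial_ne_zero (m + 1 - (j + 1))
      push_cast
      field_simp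
      ring
    · rw [← Finset.sum_neg_distrib, Finset.sum_div]
      apply Finset.sum_congr rfl
      intro j hj
      have hj := Finset.mem_range.1 hj
      rw [show m + 1 + j - 1 = m + j by omega, show m + 1 + 1 - 1 - j = m + 1 - j by omega,
        Nat.cast_choose ℝ (show j ≤ m + j by omega), show m + j - j = m by omega,
        Nat.factorial_succ m, inv_pow, neg_pow d]
      have a1 := Nat.factorial_ne_zero j
      have a2 := Nat.factorial_ne_zero m
      have a3 := Nat.factorial_ne_zero (m + 1 - j)
      have a4 : ((-1 : ℝ)) ^ j * (-1) ^ j = 1 := by rw [← mul_pow]; simp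
      have a5 : ((-1 : ℝ)) ^ m * (-1) ^ m = 1 := by rw [← mul_pow]; simp
      have a6 : ((-1 : ℝ)) ^ j ≠ 0 := by simp
      have a7 : ((-1 : ℝ)) ^ m ≠ 0 := by simp
      push_cast
      simp only [pow_add, pow_one]
      field_simp
      linear_combination iteratedDeriv (m + 1 - j) f x2 * a5

theorem tp_taylor (f : ℝ → ℝ) (x1 : ℝ) (m : ℕ) (hf : ContDiffAt ℝ m f x1) :
    (fun x : ℝ => f x - ∑ i ∈ Finset.range (m + 1),
      iteratedDeriv i f x1 / (i.factorial : ℝ) * (x - x1) ^ i)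
      =o[nhds x1] (fun x : ℝ => (x - x1) ^ m) := by
  obtain ⟨u, hu, hfu⟩ := hf.contDiffOn le_rfl (by simp)
  obtain ⟨r, hr, hru⟩ := Metric.mem_nhds_iff.1 hu
  have hx : x1 ∈ Metric.ball x1 r := Metric.mem_ball_self hr
  have h := taylor_isLittleO (convex_ball x1 r) hx (hfu.mono hru)
  rw [Metric.isOpen_ball.nhdsWithin_eq hx] at h
  refine h.congr_left fun x => ?_
  rw [taylor_within_apply]
  congr 1
  apply Finset.sum_congr rfl
  intro i hi
  rw [iteratedDerivWithin_of_isOpen Metric.isOpen_ball hx, smul_eq_mul]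
  ring

theorem tp_poly (c e : ℕ → ℝ) (d : ℝ) (hd : d ≠ 0) (n : ℕ) :
    ∃ q : Polynomial ℝ, ∀ u : ℝ, ∑ i ∈ Finset.range n, c i * u ^ i -
      ∑ k ∈ Finset.range n, (tpG c e d (k + 1) k + u * tpG c e d (k + 1) (k + 1)) *
        (u * (u + d)) ^ k = u ^ n * q.eval u := by
  have key := tpR_newton c e d hd n
  set Q : Polynomial ℝ := ∑ k ∈ Finset.range n,
    (Polynomial.C (tpG c e d (k + 1) k) + Polynomial.X * Polynomial.C (tpG c e d (k + 1) (k + 1)))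
        * (Polynomial.X * (Polynomial.X + Polynomial.C d)) ^ k with hQ
  have hdvd : (Polynomial.X : Polynomial ℝ) ^ n ∣
      ∑ i ∈ Finset.range n, Polynomial.C (c i) * Polynomial.X ^ i - Q := by
    rw [Polynomial.X_pow_dvd_iff]
    intro i hi
    have h1 : (Q : PowerSeries ℝ) = ∑ k ∈ Finset.range n,
      (PowerSeries.C (tpG c e d (k + 1) k) + PowerSeries.X * PowerSeries.C (tpG c e d (k + 1) (k + 1)))
        * (PowerSeries.X * (PowerSeries.X + PowerSeries.C d)) ^ k := by
      rw [hQ, ← Polynomial.coeToPowerSeries.ringHom_apply, map_sum]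
      simp [mul_comm (PowerSeries.X : PowerSeries ℝ) (PowerSeries.C _)]
    rw [← h1, mul_pow, mul_assoc] at key
    have h2 := congrArg (PowerSeries.coeff i) key
    rw [map_add, PowerSeries.coeff_mk, PowerSeries.coeff_X_pow_mul', if_neg (by omega),
      Polynomial.coeff_coe, add_zero] at h2
    rw [Polynomial.coeff_sub, ← h2, Polynomial.finsetSum_coeff]
    simp [Polynomial.coeff_X_pow, hi]
  obtain ⟨q, hq⟩ := hdvd
  refine ⟨q, fun u => ?_⟩
  have := congrArg (Polynomial.eval u) hq
  simpa [hQ, Polynomial.eval_finsetSum, mul_comm u (tpG _ _ _ _ _)] using this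

theorem tp_half
    (x1 x2 : ℝ) (h12 : x1 ≠ x2) (n : ℕ) (hn : 1 ≤ n) (f : ℝ → ℝ)
    (hf1 : ContDiffAt ℝ (n - 1 : ℕ) f x1) :
    (fun x : ℝ => f x - ∑ k ∈ Finset.range n,
        (twoPointCoeffR f x1 x2 k * (x - x1) + twoPointCoeffR f x2 x1 k * (x - x2)) *
          ((x - x1) * (x - x2)) ^ k)
      =o[nhds x1] (fun x : ℝ => (x - x1) ^ (n - 1)) := by
  obtain ⟨m, rfl⟩ : ∃ m, n = m + 1 := ⟨n - 1, by omega⟩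
  simp only [Nat.add_sub_cancel] at hf1 ⊢
  have hd : x1 - x2 ≠ 0 := sub_ne_zero.2 h12
  have h1 := tp_taylor f x1 m hf1
  obtain ⟨q, hq⟩ := tp_poly (fun i => iteratedDeriv i f x1 / (i.factorial : ℝ))
      (fun i => iteratedDeriv i f x2 / (i.factorial : ℝ)) (x1 - x2) hd (m + 1)
  have h2 : (fun x : ℝ => (x - x1) ^ (m + 1) * q.eval (x - x1)) =o[nhds x1]
      (fun x : ℝ => (x - x1) ^ m) := by
    have h3 : (fun x : ℝ => (x - x1) * q.eval (x - x1)) =o[nhds x1] (fun _ : ℝ => (1 : ℝ)) := by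
      rw [Asymptotics.isLittleO_one_iff]
      have : Continuous (fun x : ℝ => (x - x1) * q.eval (x - x1)) := by fun_prop
      simpa using this.tendsto x1
    have h4 := (Asymptotics.isBigO_refl (fun x : ℝ => (x - x1) ^ m) (nhds x1)).mul_isLittleO h3
    refine (h4.congr_left fun x => ?_).congr_right fun x => ?_ <;> ring
  refine (h1.add h2).congr_left fun x => ?_
  rw [← hq, sub_add_sub_cancel]
  congr 1
  apply Finset.sum_congr rfl
  intro k hk
  rw [tp_coeff_s4 f x1 x2 h12, tp_coeff_s4 f x2 x1 h12.symm]
  rw [show x - x1 + (x1 - x2) = x - x2 by ring]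
  congr 1
  set c := (fun i => iteratedDeriv i f x1 / (i.factorial : ℝ))
  set e := (fun i => iteratedDeriv i f x2 / (i.factorial : ℝ))
  have hs : tpG e c (x2 - x1) k (k + 1) = tpG c e (x1 - x2) (k + 1) k := by
    unfold tpG
    rw [neg_sub, neg_sub, add_comm]
  rw [hs]
  have hr := tpG_rec c e (x1 - x2) hd k k
  have hG : tpG c e (x1 - x2) (k + 1) (k + 1) =
    (tpG c e (x1 - x2) (k + 1) k - tpG c e (x1 - x2) k (k + 1)) / (x1 - x2) := by
    rw [← hr]; field_simp
  rw [hG, ← neg_sub x1 x2]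
  field_simp
  ring

/-- The remainder of the two-point Taylor polynomial of degree `2n−1` is
`o((x−x1)^{n−1})` as `x → x1` and `o((x−x2)^{n−1})` as `x → x2`,
provided `f` is `(n−1)`-times continuously differentiable near `x1` and `x2`. -/
theorem twoPointTaylorPolynomial_remainder_littleO
    (x1 x2 : ℝ) (h12 : x1 ≠ x2) (n : ℕ) (hn : 1 ≤ n) (f : ℝ → ℝ)
    (hf1 : ContDiffAt ℝ (n - 1 : ℕ) f x1) (hf2 : ContDiffAt ℝ (n - 1 : ℕ) f x2) :
    (fun x : ℝ => f x - ∑ k ∈ Finset.range n,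
        (twoPointCoeffR f x1 x2 k * (x - x1) + twoPointCoeffR f x2 x1 k * (x - x2)) *
          ((x - x1) * (x - x2)) ^ k)
      =o[nhds x1] (fun x : ℝ => (x - x1) ^ (n - 1)) ∧
    (fun x : ℝ => f x - ∑ k ∈ Finset.range n,
        (twoPointCoeffR f x1 x2 k * (x - x1) + twoPointCoeffR f x2 x1 k * (x - x2)) *
          ((x - x1) * (x - x2)) ^ k)
      =o[nhds x2] (fun x : ℝ => (x - x2) ^ (n - 1)) := by
  refine ⟨tp_half x1 x2 h12 n hn f hf1, ?_⟩
  refine (tp_half x2 x1 h12.symm n hn f hf2).congr_left fun x => ?_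
  congr 1
  apply Finset.sum_congr rfl
  intro k _
  ring
end

section
/- Let x1 ≠ x2 be real numbers, n ≥ 1, and let f : ℝ → ℝ be n-times continuously differentiable on a neighborhood of x1 and (n−1)-times continuously differentiable on a neighborhood of x2. Let P_n(x) = Σ_{k=0}^{n−1} [a_k(x1,x2)(x−x1) + a_k(x2,x1)(x−x2)]·((x−x1)(x−x2))^k be the two-point Taylor polynomial and set r_n(x) = f(x) − P_n(x). Then r_n(x) = O((x−x1)^{n}) as x → x1. -/
open Polynomial in
/-- Truncated binomial series. -/
noncomputable def tptD (N m : ℕ) : ℝ[X] :=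
  ∑ j ∈ Finset.range N, ((m + 2 * j).choose j : ℝ[X]) * (-(X * (1 + X))) ^ j

/-- First coefficient. -/
def tptAl (m j : ℕ) : ℕ := if j = 0 then 0 else (m + 2 * j - 1).choose (j - 1)

/-- Second coefficient. -/
def tptBe (m j : ℕ) : ℕ := (m + 2 * j - 1).choose j

theorem tpt_al_add_be (m j : ℕ) : tptAl m j + tptBe m j = (m + 2 * j).choose j := by
  unfold tptAl tptBe
  rcases j with _ | j
  · simp
  · have h1 : m + 2 * (j + 1) - 1 = m + 2 * j + 1 := by omega
    have h2 : m + 2 * (j + 1) = m + 2 * j + 1 + 1 := by omega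
    rw [h1, h2, Nat.choose_succ_succ (m + 2 * j + 1) j]
    simp

open Polynomial in
theorem tptD_pascal (N m : ℕ) :
    tptD (N + 1) (m + 1) = tptD (N + 1) m - X * (1 + X) * tptD N (m + 2) := by
  unfold tptD
  rw [Finset.sum_range_succ', Finset.sum_range_succ' _ N, Finset.mul_sum]
  have : ∀ j, (((m + 1 + 2 * (j + 1)).choose (j + 1) : ℕ) : ℝ[X])
      = ((m + 2 * (j + 1)).choose (j + 1) : ℕ) + ((m + 2 + 2 * j).choose j : ℕ) := by
    intro j
    rw [show m + 1 + 2 * (j + 1) = (m + 2 + 2 * j) + 1 by ring,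
      show m + 2 * (j + 1) = m + 2 + 2 * j by ring, Nat.choose_succ_succ]
    push_cast; ring
  simp only [this, add_mul, Finset.sum_add_distrib]
  have e : ∑ j ∈ Finset.range N, (((m + 2 + 2 * j).choose j : ℕ) : ℝ[X]) * (-(X * (1 + X))) ^ (j + 1)
      = - ∑ j ∈ Finset.range N, X * (1 + X) *
        ((((m + 2 + 2 * j).choose j : ℕ) : ℝ[X]) * (-(X * (1 + X))) ^ j) := by
    rw [← Finset.sum_neg_distrib]
    exact Finset.sum_congr rfl fun j _ => by ring
  rw [e]
  simp
  ring

open Polynomial in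
theorem tptD_zero (N : ℕ) :
    tptD (N + 1) 0 = 1 - 2 * (X * (1 + X)) * tptD N 1 := by
  unfold tptD
  rw [Finset.sum_range_succ', Finset.mul_sum]
  have : ∀ j, (((0 + 2 * (j + 1)).choose (j + 1) : ℕ) : ℝ[X])
      = 2 * ((1 + 2 * j).choose j : ℕ) := by
    intro j
    have h := Nat.choose_symm_half j
    rw [show 0 + 2 * (j + 1) = (2 * j + 1) + 1 by ring, Nat.choose_succ_succ, h,
      show 1 + 2 * j = 2 * j + 1 by ring]
    push_cast; ring
  simp only [this]
  have e : ∑ j ∈ Finset.range N, 2 * (((1 + 2 * j).choose j : ℕ) : ℝ[X]) * (-(X * (1 + X))) ^ (j + 1)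
      = - ∑ j ∈ Finset.range N, 2 * (X * (1 + X)) *
        ((((1 + 2 * j).choose j : ℕ) : ℝ[X]) * (-(X * (1 + X))) ^ j) := by
    rw [← Finset.sum_neg_distrib]
    exact Finset.sum_congr rfl fun j _ => by ring
  rw [e]
  simp
  ring

open Polynomial in
theorem tptD_last (N m : ℕ) : (X : ℝ[X]) ^ N ∣ tptD (N + 1) m - tptD N m := by
  unfold tptD
  rw [Finset.sum_range_succ]
  refine ⟨((m + 2 * N).choose N : ℝ[X]) * (-(1 + X)) ^ N, ?_⟩
  rw [show -(X * (1 + X)) = (X : ℝ[X]) * (-(1 + X)) by ring, mul_pow]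
  ring

open Polynomial in
theorem tptD_step (N : ℕ) : ∀ m, (X : ℝ[X]) ^ N ∣ tptD N m - (1 + X) * tptD N (m + 1) := by
  induction N with
  | zero => intro m; simp
  | succ N ih =>
    intro m
    obtain ⟨p, hp⟩ := ih (m + 1)
    obtain ⟨q, hq⟩ := tptD_last N (m + 1)
    refine ⟨-(p + q), ?_⟩
    have := tptD_pascal N m
    rw [pow_succ]
    linear_combination -this - X * hp - X * hq

open Polynomial in
theorem tptD_pow (N m : ℕ) : (X : ℝ[X]) ^ N ∣ tptD N 0 - (1 + X) ^ m * tptD N m := by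
  induction m with
  | zero => simp
  | succ m ih =>
    have := dvd_add ih ((tptD_step N m).mul_left ((1 + X) ^ m))
    convert this using 1
    ring

open Polynomial in
theorem tptD_base (N : ℕ) : (X : ℝ[X]) ^ N ∣ (1 + 2 * X) * tptD N 0 - 1 := by
  rcases N with _ | N
  · simp
  · obtain ⟨p, hp⟩ := tptD_step N 0
    obtain ⟨q, hq⟩ := tptD_last N 0
    refine ⟨2 * (p + q), ?_⟩
    have := tptD_zero N
    rw [pow_succ]
    simp only [zero_add] at hp
    linear_combination this + 2 * X * hp + 2 * X * hq

open Polynomial in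
theorem tpt_al_sum (N m : ℕ) :
    ∑ j ∈ Finset.range (N + 1), (tptAl m j : ℝ[X]) * (-(X * (1 + X))) ^ j
      = -(X * (1 + X)) * tptD N (m + 1) := by
  unfold tptD
  rw [Finset.sum_range_succ', Finset.mul_sum]
  simp only [tptAl, if_true, Nat.cast_zero, zero_mul, add_zero]
  refine Finset.sum_congr rfl fun j _ => ?_
  rw [if_neg (Nat.succ_ne_zero j), show m + 2 * (j + 1) - 1 = m + 1 + 2 * j by omega,
    show j + 1 - 1 = j by omega]
  ring

open Polynomial in
theorem tpt_A (N m : ℕ) :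
    (X : ℝ[X]) ^ N ∣ (1 + X) ^ m * (∑ j ∈ Finset.range N,
      ((tptAl m j : ℝ[X]) * X + (tptBe m j : ℝ[X]) * (1 + X)) * (-(X * (1 + X))) ^ j) - 1 := by
  rcases N with _ | N
  · simp
  have h : ∑ j ∈ Finset.range (N + 1),
      ((tptAl m j : ℝ[X]) * X + (tptBe m j : ℝ[X]) * (1 + X)) * (-(X * (1 + X))) ^ j
      = (1 + X) * (tptD (N + 1) m + X * tptD N (m + 1)) := by
    have := tpt_al_sum N m
    have h2 : (1 + X) * (tptD (N + 1) m + X * tptD N (m + 1))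
      = (1 + X) * tptD (N + 1) m - (-(X * (1 + X)) * tptD N (m + 1)) := by ring
    rw [h2, ← this, tptD, Finset.mul_sum, ← Finset.sum_sub_distrib]
    refine Finset.sum_congr rfl fun j _ => ?_
    rw [← tpt_al_add_be]
    push_cast; ring
  rw [h]
  obtain ⟨p, hp⟩ := tptD_pow (N + 1) m
  obtain ⟨q, hq⟩ := tptD_pow N (m + 1)
  obtain ⟨r, hr⟩ := tptD_base (N + 1)
  obtain ⟨s, hs⟩ := tptD_last N 0
  refine ⟨r - (1 + X) * p - q - s, ?_⟩
  rw [pow_succ] at *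
  linear_combination hr - (1 + X) * hp - X * hq - X * hs

open Polynomial in
theorem tpt_B (N m : ℕ) :
    (X : ℝ[X]) ^ N ∣ (∑ j ∈ Finset.range N,
      ((tptBe m j : ℝ[X]) * X + (tptAl m j : ℝ[X]) * (1 + X)) * (-(X * (1 + X))) ^ j) := by
  rcases N with _ | N
  · simp
  have h : ∑ j ∈ Finset.range (N + 1),
      ((tptBe m j : ℝ[X]) * X + (tptAl m j : ℝ[X]) * (1 + X)) * (-(X * (1 + X))) ^ j
      = X * (tptD (N + 1) m - (1 + X) * tptD N (m + 1)) := by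
    have := tpt_al_sum N m
    have h2 : X * (tptD (N + 1) m - (1 + X) * tptD N (m + 1))
      = X * tptD (N + 1) m + (-(X * (1 + X)) * tptD N (m + 1)) := by ring
    rw [h2, ← this, tptD, Finset.mul_sum, ← Finset.sum_add_distrib]
    refine Finset.sum_congr rfl fun j _ => ?_
    rw [← tpt_al_add_be]
    push_cast; ring
  rw [h]
  obtain ⟨p, hp⟩ := tptD_step N m
  obtain ⟨s, hs⟩ := tptD_last N m
  refine ⟨p + s, ?_⟩
  rw [pow_succ]
  linear_combination X * hp + X * hs

open Polynomial in
theorem tpt_A_eval (n m : ℕ) (hm : m < n) : ∃ q : ℝ[X], ∀ t : ℝ,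
    (t * (1 + t)) ^ m * (∑ j ∈ Finset.range (n - m),
      ((tptAl m j : ℝ) * t + (tptBe m j : ℝ) * (1 + t)) * (-(t * (1 + t))) ^ j)
      = t ^ m + t ^ n * q.eval t := by
  obtain ⟨q, hq⟩ := tpt_A (n - m) m
  refine ⟨q, fun t => ?_⟩
  have := congrArg (Polynomial.eval t) hq
  simp only [eval_sub, eval_mul, eval_pow, eval_add, eval_one, eval_X, eval_finsetSum,
    eval_natCast, eval_neg] at this
  have e : t ^ n = t ^ m * t ^ (n - m) := by rw [← pow_add]; congr 1; omega
  rw [e, mul_pow]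
  linear_combination t ^ m * this

open Polynomial in
theorem tpt_B_eval (n m : ℕ) (hm : m < n) : ∃ q : ℝ[X], ∀ t : ℝ,
    (t * (1 + t)) ^ m * (∑ j ∈ Finset.range (n - m),
      ((tptBe m j : ℝ) * t + (tptAl m j : ℝ) * (1 + t)) * (-(t * (1 + t))) ^ j)
      = t ^ n * q.eval t := by
  obtain ⟨q, hq⟩ := tpt_B (n - m) m
  refine ⟨(1 + X) ^ m * q, fun t => ?_⟩
  have := congrArg (Polynomial.eval t) hq
  simp only [eval_mul, eval_pow, eval_add, eval_one, eval_X, eval_finsetSum,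
    eval_natCast] at this ⊢
  simp only [eval_neg, eval_mul, eval_pow, eval_add, eval_one, eval_X] at this
  have e : t ^ n = t ^ m * t ^ (n - m) := by rw [← pow_add]; congr 1; omega
  rw [e, mul_pow]
  linear_combination t ^ m * (1 + t) ^ m * this

theorem tpt_coeff (f : ℝ → ℝ) (x1 x2 : ℝ) (h : x1 ≠ x2) (k : ℕ) :
    twoPointCoeffR f x1 x2 k = ∑ j ∈ Finset.range (k + 1),
      ((-1) ^ (k + 1) * tptBe (k - j) j * (iteratedDeriv (k - j) f x2 / (k - j).factorial)
        + (-1) ^ j * tptAl (k - j) j * (iteratedDeriv (k - j) f x1 / (k - j).factorial))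
        / (x1 - x2) ^ (k + j + 1) := by
  have hd : x1 - x2 ≠ 0 := sub_ne_zero.mpr h
  have hd' : x2 - x1 ≠ 0 := sub_ne_zero.mpr h.symm
  unfold twoPointCoeffR
  split_ifs with hk
  · subst hk
    simp [tptAl, tptBe]
    field_simp
    ring
  · refine Finset.sum_congr rfl fun j hj => ?_
    have hjk : j ≤ k := by simpa [Nat.lt_succ_iff] using hj
    obtain ⟨m, rfl⟩ := Nat.exists_eq_add_of_le' hjk
    rw [Nat.add_sub_cancel]
    have hb : (tptBe m j : ℝ) = ((m + j + j - 1).factorial : ℝ) * (m + j : ℕ)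
        / (j.factorial * (m + j).factorial) := by
      unfold tptBe
      obtain ⟨k', hk'⟩ := Nat.exists_eq_succ_of_ne_zero hk
      rw [show m + 2 * j - 1 = j + k' by omega, show m + j + j - 1 = j + k' by omega, hk',
        Nat.cast_add_choose, Nat.succ_eq_add_one, Nat.factorial_succ]
      have h1 : (j.factorial : ℝ) ≠ 0 := by positivity
      have h2 : (k'.factorial : ℝ) ≠ 0 := by positivity
      have h3 : ((k' : ℝ) + 1) ≠ 0 := by positivity
      push_cast
      field_simp
    have ha : (tptAl m j : ℝ) = ((m + j + j - 1).factorial : ℝ) * j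
        / (j.factorial * (m + j).factorial) := by
      unfold tptAl
      rcases j with _ | j
      · simp
      · rw [if_neg (Nat.succ_ne_zero j), show j + 1 - 1 = j by omega,
          show m + 2 * (j + 1) - 1 = j + (m + (j + 1)) by omega,
          show m + (j + 1) + (j + 1) - 1 = j + (m + (j + 1)) by omega,
          Nat.cast_add_choose, Nat.factorial_succ j]
        have h1 : (j.factorial : ℝ) ≠ 0 := by positivity
        have h2 : ((m + (j + 1)).factorial : ℝ) ≠ 0 := by positivity
        have h3 : ((j : ℝ) + 1) ≠ 0 := by positivity
        push_cast
        field_simp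
    rw [hb, ha]
    have h1 : (j.factorial : ℝ) ≠ 0 := by positivity
    have h2 : (m.factorial : ℝ) ≠ 0 := by positivity
    have h3 : ((m + j).factorial : ℝ) ≠ 0 := by positivity
    field_simp

theorem tpt_taylor (f : ℝ → ℝ) (x1 : ℝ) (n : ℕ) (hf : ContDiffAt ℝ (n : ℕ) f x1) :
    (fun x => f x - ∑ m ∈ Finset.range n, iteratedDeriv m f x1 / m.factorial * (x - x1) ^ m)
      =O[nhds x1] (fun x : ℝ => (x - x1) ^ n) := by
  have hev := hf.eventually (by simp)
  obtain ⟨ε, hε, hb⟩ := Metric.eventually_nhds_iff_ball.mp hev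
  have hs : ContDiffOn ℝ n f (Metric.ball x1 ε) := fun y hy => (hb y hy).contDiffWithinAt
  have hx : x1 ∈ Metric.ball x1 ε := Metric.mem_ball_self hε
  have h := (taylor_isLittleO (convex_ball x1 ε) hx hs).isBigO
  rw [Metric.isOpen_ball.nhdsWithin_eq hx] at h
  have h2 : (fun x : ℝ => iteratedDeriv n f x1 / n.factorial * (x - x1) ^ n)
      =O[nhds x1] (fun x : ℝ => (x - x1) ^ n) :=
    (Asymptotics.isBigO_refl _ _).const_mul_left _
  refine (h.add h2).congr_left fun x => ?_
  rw [taylor_within_apply, Finset.sum_range_succ]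
  have : ∀ k, iteratedDerivWithin k f (Metric.ball x1 ε) x1 = iteratedDeriv k f x1 :=
    fun k => iteratedDerivWithin_of_isOpen Metric.isOpen_ball hx
  simp only [this, smul_eq_mul]
  have e : ∀ k, ((k.factorial : ℝ)⁻¹ * (x - x1) ^ k) * iteratedDeriv k f x1
    = iteratedDeriv k f x1 / k.factorial * (x - x1) ^ k := fun k => by
      rw [div_eq_mul_inv]; ring
  simp only [e]
  ring

theorem tpt_term (d t F G al be : ℝ) (hd : d ≠ 0) (m j : ℕ) :
    (((-1) ^ (m + j + 1) * be * G + (-1) ^ j * al * F) / d ^ (m + j + j + 1) * (d * t)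
      + ((-1) ^ (m + j + 1) * be * F + (-1) ^ j * al * G) / (-d) ^ (m + j + j + 1) * (d * (1 + t)))
      * (d * t * (d * (1 + t))) ^ (m + j)
    = F * d ^ m * ((t * (1 + t)) ^ m * ((al * t + be * (1 + t)) * (-(t * (1 + t))) ^ j))
      + -(-1) ^ m * G * d ^ m * ((t * (1 + t)) ^ m * ((be * t + al * (1 + t)) * (-(t * (1 + t))) ^ j)) := by
  have h1 : (-d) ^ (m + j + j + 1) = -(-1) ^ m * d ^ (m + j + j + 1) := by
    rw [neg_pow, show m + j + j + 1 = m + 2 * j + 1 by ring, pow_succ, pow_add, pow_mul]; simp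
  have hs : ((-1 : ℝ) ^ m) * (-1) ^ m = 1 := by rw [← mul_pow]; simp
  have hi : ((-1 : ℝ) ^ m)⁻¹ = (-1) ^ m := inv_eq_of_mul_eq_one_left hs
  have e : (d * t * (d * (1 + t))) ^ (m + j) * d = d ^ (m + j + j + 1) * (d ^ m * ((t * (1 + t)) ^ m * (t * (1 + t)) ^ j)) := by
    rw [show d * t * (d * (1 + t)) = d * d * (t * (1 + t)) by ring, mul_pow,
      pow_add (t * (1 + t))]
    ring
  rw [h1, neg_pow (t * (1 + t)) j]
  have hD : d ^ (m + j + j + 1) ≠ 0 := pow_ne_zero _ hd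
  generalize d ^ (m + j + j + 1) = D at *
  have e' : (d * t * (d * (1 + t))) ^ (m + j) * d / D = (d ^ m * ((t * (1 + t)) ^ m * (t * (1 + t)) ^ j)) := by
    rw [e]; field_simp
  trans (((-1) ^ (m + j + 1) * be * G + (-1) ^ j * al * F) * t
      - ((-1) ^ (m + j + 1) * be * F + (-1) ^ j * al * G) * ((-1) ^ m) * (1 + t))
      * ((d * t * (d * (1 + t))) ^ (m + j) * d / D)
  · rw [div_eq_mul_inv _ (-(-1) ^ m * D), mul_inv, inv_neg, hi]; ring
  · rw [e', pow_succ, pow_add]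
    linear_combination (F * be * (-1) ^ j * (1 + t)) * (d ^ m * ((t * (1 + t)) ^ m * (t * (1 + t)) ^ j)) * hs

theorem tpt_sum (f : ℝ → ℝ) (x1 x2 : ℝ) (h12 : x1 ≠ x2) (n : ℕ) (x t : ℝ)
    (hx1 : x - x1 = (x1 - x2) * t) (hx2 : x - x2 = (x1 - x2) * (1 + t)) :
    ∑ k ∈ Finset.range n,
        (twoPointCoeffR f x1 x2 k * (x - x1) + twoPointCoeffR f x2 x1 k * (x - x2)) *
          ((x - x1) * (x - x2)) ^ k
    = ∑ m ∈ Finset.range n,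
      ((iteratedDeriv m f x1 / m.factorial) * (x1 - x2) ^ m *
        ((t * (1 + t)) ^ m * (∑ j ∈ Finset.range (n - m),
      ((tptAl m j : ℝ) * t + (tptBe m j : ℝ) * (1 + t)) * (-(t * (1 + t))) ^ j))
      + -(-1) ^ m * (iteratedDeriv m f x2 / m.factorial) * (x1 - x2) ^ m *
        ((t * (1 + t)) ^ m * (∑ j ∈ Finset.range (n - m),
      ((tptBe m j : ℝ) * t + (tptAl m j : ℝ) * (1 + t)) * (-(t * (1 + t))) ^ j))) := by
  have hd : x1 - x2 ≠ 0 := sub_ne_zero.mpr h12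
  simp only [Finset.mul_sum, ← Finset.sum_add_distrib]
  rw [← Finset.sum_range_diag_flip n (fun m j =>
    (iteratedDeriv m f x1 / m.factorial) * (x1 - x2) ^ m * ((t * (1 + t)) ^ m *
      (((tptAl m j : ℝ) * t + (tptBe m j : ℝ) * (1 + t)) * (-(t * (1 + t))) ^ j))
      + -(-1) ^ m * (iteratedDeriv m f x2 / m.factorial) * (x1 - x2) ^ m *
        ((t * (1 + t)) ^ m * 
      (((tptBe m j : ℝ) * t + (tptAl m j : ℝ) * (1 + t)) * (-(t * (1 + t))) ^ j)))]
  refine Finset.sum_congr rfl fun k _ => ?_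
  rw [tpt_coeff f x1 x2 h12, tpt_coeff f x2 x1 h12.symm, Finset.sum_mul, Finset.sum_mul,
    ← Finset.sum_add_distrib, Finset.sum_mul, ← Finset.sum_range_reflect]
  refine Finset.sum_congr rfl fun m hm => ?_
  have hmk : m ≤ k := by simpa [Nat.lt_succ_iff] using hm
  obtain ⟨j, rfl⟩ := Nat.exists_eq_add_of_le hmk
  rw [show m + j + 1 - 1 - m = j by omega, show m + j - j = m by omega,
    show m + j - m = j by omega, show x2 - x1 = -(x1 - x2) by ring, hx1, hx2]
  exact tpt_term _ _ _ _ _ _ hd _ _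

/-- The remainder of the two-point Taylor polynomial of degree `2n−1` is
`O((x−x1)^n)` as `x → x1`, provided `f` is `n`-times continuously differentiable near
`x1` and `(n−1)`-times continuously differentiable near `x2`. -/
theorem twoPointTaylorPolynomial_remainder_bigO
    (x1 x2 : ℝ) (h12 : x1 ≠ x2) (n : ℕ) (hn : 1 ≤ n) (f : ℝ → ℝ)
    (hf1 : ContDiffAt ℝ (n : ℕ) f x1) (hf2 : ContDiffAt ℝ (n - 1 : ℕ) f x2) :
    (fun x : ℝ => f x - ∑ k ∈ Finset.range n,
        (twoPointCoeffR f x1 x2 k * (x - x1) + twoPointCoeffR f x2 x1 k * (x - x2)) *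
          ((x - x1) * (x - x2)) ^ k)
      =O[nhds x1] (fun x : ℝ => (x - x1) ^ n) := by
  have hd : x1 - x2 ≠ 0 := sub_ne_zero.mpr h12
  have key : ∃ q : Polynomial ℝ, ∀ t : ℝ, ∑ m ∈ Finset.range n,
      ((iteratedDeriv m f x1 / m.factorial) * (x1 - x2) ^ m *
        ((t * (1 + t)) ^ m * (∑ j ∈ Finset.range (n - m),
      ((tptAl m j : ℝ) * t + (tptBe m j : ℝ) * (1 + t)) * (-(t * (1 + t))) ^ j))
      + -(-1) ^ m * (iteratedDeriv m f x2 / m.factorial) * (x1 - x2) ^ m *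
        ((t * (1 + t)) ^ m * (∑ j ∈ Finset.range (n - m),
      ((tptBe m j : ℝ) * t + (tptAl m j : ℝ) * (1 + t)) * (-(t * (1 + t))) ^ j)))
      = ∑ m ∈ Finset.range n, iteratedDeriv m f x1 / m.factorial * ((x1 - x2) * t) ^ m
        + t ^ n * q.eval t := by
    have hA : ∀ m, ∃ q : Polynomial ℝ, m < n → ∀ t : ℝ, _ := fun m => by
      by_cases hm : m < n
      · exact (tpt_A_eval n m hm).imp fun q hq _ => hq
      · exact ⟨0, fun h => absurd h hm⟩
    have hB : ∀ m, ∃ q : Polynomial ℝ, m < n → ∀ t : ℝ, _ := fun m => by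
      by_cases hm : m < n
      · exact (tpt_B_eval n m hm).imp fun q hq _ => hq
      · exact ⟨0, fun h => absurd h hm⟩
    choose qA hqA using hA
    choose qB hqB using hB
    refine ⟨∑ m ∈ Finset.range n,
      (Polynomial.C ((iteratedDeriv m f x1 / m.factorial) * (x1 - x2) ^ m) * qA m
       + Polynomial.C (-(-1) ^ m * (iteratedDeriv m f x2 / m.factorial) * (x1 - x2) ^ m) * qB m),
      fun t => ?_⟩
    rw [Polynomial.eval_finsetSum, Finset.mul_sum, ← Finset.sum_add_distrib]
    refine Finset.sum_congr rfl fun m hm => ?_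
    rw [hqA m (Finset.mem_range.mp hm) t, hqB m (Finset.mem_range.mp hm) t]
    simp only [Polynomial.eval_add, Polynomial.eval_mul, Polynomial.eval_C, mul_pow]
    ring
  obtain ⟨q, hq⟩ := key
  have hO : (fun x : ℝ => (x - x1) ^ n * ((x1 - x2)⁻¹ ^ n * q.eval ((x - x1) / (x1 - x2))))
      =O[nhds x1] (fun x : ℝ => (x - x1) ^ n) := by
    have hc : Continuous fun x : ℝ => (x1 - x2)⁻¹ ^ n * q.eval ((x - x1) / (x1 - x2)) := by
      fun_prop
    have h1 := (hc.tendsto x1).isBigO_one ℝ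
    simpa using (Asymptotics.isBigO_refl (fun x : ℝ => (x - x1) ^ n) (nhds x1)).mul h1
  refine ((tpt_taylor f x1 n hf1).sub hO).congr_left fun x => ?_
  have hx1 : x - x1 = (x1 - x2) * ((x - x1) / (x1 - x2)) := by field_simp
  have hx2 : x - x2 = (x1 - x2) * (1 + (x - x1) / (x1 - x2)) := by field_simp; ring
  rw [tpt_sum f x1 x2 h12 n x _ hx1 hx2, hq, ← hx1, div_pow, inv_pow]
  ring
end

section
/- Let z1 ≠ z2 be complex numbers, m1, m2 ≥ 1 natural numbers, and let g1 be analytic at z1 and g2 be analytic at z2. Then for every n ≥ 0, (1/(z2−z1)) · [ (1/(n+m1−1)!) · D^{n+m1−1}( w ↦ g1(w)/(w−z2)^{n+1} )(z1) + (1/(n+m2)!) · D^{n+m2}( w ↦ g2(w)/(w−z1)^{n} )(z2) ] = Σ_{k=0}^{n+m1−1} C(n+m1−1,k)·(−1)^{k+1}·(n+1)_k·g1^{(n+m1−k−1)}(z1)/((n+m1−1)!·(z1−z2)^{n+k+2}) + Σ_{k=0}^{n+m2} C(n+m2,k)·(−1)^k·(n)_k·g2^{(n+m2−k)}(z2)/((n+m2)!·(z2−z1)^{n+k+1}).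 -/
lemma aux_pow (a : ℂ) (p k : ℕ) (z : ℂ) :
    iteratedDeriv k (fun w : ℂ => ((w - a) ^ p)⁻¹) z
      = (-1) ^ k * Polynomial.eval (p : ℂ) (ascPochhammer ℂ k) / (z - a) ^ (p + k) := by
  have h0 : (fun w : ℂ => ((w - a) ^ p)⁻¹) = fun w => (fun x : ℂ => x ^ (-(p : ℤ))) (w - a) := by
    funext w; simp [zpow_neg]
  rw [h0, iteratedDeriv_comp_sub_const k (fun x : ℂ => x ^ (-(p : ℤ))) a]
  simp only [iteratedDeriv_eq_iterate]
  rw [iter_deriv_zpow]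
  have h1 : ∏ i ∈ Finset.range k, (((-(p : ℤ) : ℤ) : ℂ) - i)
      = (-1) ^ k * Polynomial.eval (p : ℂ) (ascPochhammer ℂ k) := by
    induction k with
    | zero => simp
    | succ k ih =>
      rw [Finset.prod_range_succ, ih, ascPochhammer_succ_eval]
      push_cast
      ring
  have h2 : (z - a) ^ (-(p : ℤ) - k) = ((z - a) ^ (p + k))⁻¹ := by
    rw [show (-(p : ℤ) - k) = -((p + k : ℕ) : ℤ) by push_cast; ring, zpow_neg, zpow_natCast]
  rw [h1, h2, div_eq_mul_inv]

lemma aux_leib (a z : ℂ) (h : z ≠ a) (g : ℂ → ℂ) (hg : AnalyticAt ℂ g z) (p N : ℕ) :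
    iteratedDeriv N (fun w => g w / (w - a) ^ p) z
      = ∑ k ∈ Finset.range (N + 1), (N.choose k : ℂ) *
        ((-1) ^ k * Polynomial.eval (p : ℂ) (ascPochhammer ℂ k) / (z - a) ^ (p + k)) *
          iteratedDeriv (N - k) g z := by
  have h0 : (fun w => g w / (w - a) ^ p) = fun w => ((w - a) ^ p)⁻¹ * g w := by
    funext w; rw [div_eq_mul_inv, mul_comm]
  have hf : AnalyticAt ℂ (fun w : ℂ => ((w - a) ^ p)⁻¹) z := by
    have : (z - a) ^ p ≠ 0 := pow_ne_zero _ (sub_ne_zero.2 h)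
    exact AnalyticAt.fun_inv (by fun_prop) this
  rw [h0, iteratedDeriv_fun_mul hf.contDiffAt hg.contDiffAt]
  simp only [aux_pow]


/-- Explicit formula for the two-point Laurent coefficient `b_n(z1,z2)`:
the sum of the residues at `z1` and `z2` of `g1(w)(w−z1)^{−n−m1}(w−z2)^{−n−1}`
(equivalently of `f(w)(w−z1)^{−n}(w−z2)^{−n−1}`), divided by `(z2−z1)`,
equals the explicit finite double sum. `(a)_k` is the Pochhammer symbol. -/
theorem twoPointLaurentB_eq_residue_sum
    (z1 z2 : ℂ) (h12 : z1 ≠ z2) (m1 m2 : ℕ) (hm1 : 1 ≤ m1) (hm2 : 1 ≤ m2)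
    (g1 g2 : ℂ → ℂ) (hg1 : AnalyticAt ℂ g1 z1) (hg2 : AnalyticAt ℂ g2 z2)
    (n : ℕ) :
    (1 / (z2 - z1)) *
      ((1 / (Nat.factorial (n + m1 - 1) : ℂ)) *
          iteratedDeriv (n + m1 - 1) (fun w => g1 w / (w - z2) ^ (n + 1)) z1
        + (1 / (Nat.factorial (n + m2) : ℂ)) *
          iteratedDeriv (n + m2) (fun w => g2 w / (w - z1) ^ n) z2)
    = (∑ k ∈ Finset.range (n + m1),
        (Nat.choose (n + m1 - 1) k : ℂ) * (-1 : ℂ) ^ (k + 1) *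
          Polynomial.eval ((n : ℂ) + 1) (ascPochhammer ℂ k) *
          iteratedDeriv (n + m1 - k - 1) g1 z1 /
          ((Nat.factorial (n + m1 - 1) : ℂ) * (z1 - z2) ^ (n + k + 2)))
      + (∑ k ∈ Finset.range (n + m2 + 1),
        (Nat.choose (n + m2) k : ℂ) * (-1 : ℂ) ^ k *
          Polynomial.eval (n : ℂ) (ascPochhammer ℂ k) *
          iteratedDeriv (n + m2 - k) g2 z2 /
          ((Nat.factorial (n + m2) : ℂ) * (z2 - z1) ^ (n + k + 1))) := by
  have h21 : z2 - z1 ≠ 0 := sub_ne_zero.2 h12.symm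
  have h21' : z1 - z2 ≠ 0 := sub_ne_zero.2 h12
  rw [aux_leib z2 z1 h12 g1 hg1, aux_leib z1 z2 h12.symm g2 hg2, mul_add]
  rw [show n + m1 - 1 + 1 = n + m1 by omega]
  simp only [Finset.mul_sum]
  congr 1
  · refine Finset.sum_congr rfl fun k _ => ?_
    have hf : (Nat.factorial (n + m1 - 1) : ℂ) ≠ 0 := by exact_mod_cast Nat.factorial_ne_zero _
    rw [show n + m1 - k - 1 = n + m1 - 1 - k by omega,
      show n + k + 2 = (n + 1 + k) + 1 by ring, show z2 - z1 = -(z1 - z2) by ring]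
    generalize z1 - z2 = d at *
    push_cast
    rw [pow_succ d, pow_succ (-1 : ℂ)]
    field_simp
  · refine Finset.sum_congr rfl fun k _ => ?_
    have hf : (Nat.factorial (n + m2) : ℂ) ≠ 0 := by exact_mod_cast Nat.factorial_ne_zero _
    rw [pow_succ (z2 - z1)]
    field_simp
end

section
/- Let z1 ≠ z2 be complex numbers, m1, m2 ≥ 1 natural numbers, and let g1 be analytic at z1 and g2 be analytic at z2. Then for every n ≥ 0, (1/(z2−z1)) · [ T1 + T2 ] = −Σ_{k=0}^{m1−n−2} k!·C(m1−n−2,k)·C(n,k)·(z1−z2)^{n−k−1}·g1^{(m1−n−k−2)}(z1)/(m1−n−2)! + Σ_{k=0}^{m2−n−1} k!·C(m2−n−1,k)·C(n+1,k)·(z2−z1)^{n−k}·g2^{(m2−n−k−1)}(z2)/(m2−n−1)!, where T1 = (1/(m1−n−2)!) · D^{m1−n−2}( w ↦ (w−z2)^{n}·g1(w) )(z1) if n ≤ m1−2 and T1 = 0 otherwise, and T2 = (1/(m2−n−1)!) · D^{m2−n−1}( w ↦ (w−z1)^{n+1}·g2(w) )(z2) if n ≤ m2−1 and T2 = 0 otherwise;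 sums whose upper limit is negative are understood as zero. -/
lemma aux_leibniz (a b : ℂ) (hab : a - b ≠ 0) (N p : ℕ) (g : ℂ → ℂ) (hg : AnalyticAt ℂ g a) :
    (1 / (a - b)) * iteratedDeriv N (fun w => (w - b) ^ p * g w) a =
      ∑ k ∈ Finset.range (N + 1), (Nat.factorial k : ℂ) * (Nat.choose N k : ℂ) *
        (Nat.choose p k : ℂ) * (a - b) ^ ((p : ℤ) - k - 1) * iteratedDeriv (N - k) g a := by
  have h1 : ContDiffAt ℂ N (fun w : ℂ => (w - b) ^ p) a := by fun_prop
  rw [iteratedDeriv_fun_mul h1 hg.contDiffAt, Finset.mul_sum]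
  refine Finset.sum_congr rfl fun k _ => ?_
  have h2 : iteratedDeriv k (fun w : ℂ => (w - b) ^ p) a
      = (p.descFactorial k : ℂ) * (a - b) ^ (p - k) := by
    have := congrFun (iteratedDeriv_comp_sub_const k (fun w : ℂ => w ^ p) b) a
    rw [this]
    simp
  rw [h2, Nat.descFactorial_eq_factorial_mul_choose]
  push_cast
  rcases le_or_gt k p with hk | hk
  · have h3 : (a - b) ^ ((p : ℤ) - k - 1) = (a - b) ^ (p - k) * (1 / (a - b)) := by
      rw [zpow_sub_one₀ hab, ← Nat.cast_sub hk, zpow_natCast, one_div]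
    rw [h3]
    ring
  · simp [Nat.choose_eq_zero_of_lt hk]

/-- Explicit formula for the two-point Laurent coefficient `c_n(z1,z2)`:
the sum of the residues at `z1` and `z2` of `(w−z1)^{n+1}(w−z2)^n f(w)` (with
`(w−z1)^{m1} f = g1` near `z1`, `(w−z2)^{m2} f = g2` near `z2`), divided by `(z2−z1)`,
equals the explicit finite double sum; empty sums (negative upper limit) are zero. -/
theorem twoPointLaurentC_eq_residue_sum
    (z1 z2 : ℂ) (h12 : z1 ≠ z2) (m1 m2 : ℕ) (hm1 : 1 ≤ m1) (hm2 : 1 ≤ m2)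
    (g1 g2 : ℂ → ℂ) (hg1 : AnalyticAt ℂ g1 z1) (hg2 : AnalyticAt ℂ g2 z2)
    (n : ℕ) :
    (1 / (z2 - z1)) *
      ((if n + 2 ≤ m1 then
          (1 / (Nat.factorial (m1 - n - 2) : ℂ)) *
            iteratedDeriv (m1 - n - 2) (fun w => (w - z2) ^ n * g1 w) z1
        else 0)
      + (if n + 1 ≤ m2 then
          (1 / (Nat.factorial (m2 - n - 1) : ℂ)) *
            iteratedDeriv (m2 - n - 1) (fun w => (w - z1) ^ (n + 1) * g2 w) z2
        else 0))
    = -(∑ k ∈ Finset.range (m1 - n - 1),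
        (Nat.factorial k : ℂ) * (Nat.choose (m1 - n - 2) k : ℂ) * (Nat.choose n k : ℂ) *
          (z1 - z2) ^ ((n : ℤ) - k - 1) *
          iteratedDeriv (m1 - n - k - 2) g1 z1 / (Nat.factorial (m1 - n - 2) : ℂ))
      + (∑ k ∈ Finset.range (m2 - n),
        (Nat.factorial k : ℂ) * (Nat.choose (m2 - n - 1) k : ℂ) * (Nat.choose (n + 1) k : ℂ) *
          (z2 - z1) ^ ((n : ℤ) - k) *
          iteratedDeriv (m2 - n - k - 1) g2 z2 / (Nat.factorial (m2 - n - 1) : ℂ)) := by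
  have ha : z1 - z2 ≠ 0 := sub_ne_zero.mpr h12
  have hb : z2 - z1 ≠ 0 := sub_ne_zero.mpr h12.symm
  rw [mul_add]
  congr 1
  · split_ifs with h
    · have e := aux_leibniz z1 z2 ha (m1 - n - 2) n g1 hg1
      have hr : m1 - n - 1 = m1 - n - 2 + 1 := by omega
      have hi : (1 : ℂ) / (z2 - z1) = -(1 / (z1 - z2)) := by
        rw [← neg_sub z1 z2, one_div, one_div, inv_neg]
      rw [← Finset.sum_div, hr, hi]
      have e3 : ∀ k : ℕ, m1 - n - k - 2 = m1 - n - 2 - k := by intro k; omega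
      simp only [e3]
      rw [← e]
      ring
    · have hr : m1 - n - 1 = 0 := by omega
      simp [hr]
  · split_ifs with h
    · have e := aux_leibniz z2 z1 hb (m2 - n - 1) (n + 1) g2 hg2
      have hr : m2 - n = m2 - n - 1 + 1 := by omega
      have e2 : ∀ k : ℕ, ((n + 1 : ℕ) : ℤ) - k - 1 = (n : ℤ) - k := by
        intro k; push_cast; ring
      simp only [e2] at e
      have e3 : ∀ k : ℕ, m2 - n - k - 1 = m2 - n - 1 - k := by intro k; omega
      simp only [e3]
      rw [← Finset.sum_div, show Finset.range (m2 - n) = Finset.range (m2 - n - 1 + 1) by rw [← hr],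
        ← e]
      ring
    · have hr : m2 - n = 0 := by omega
      simp [hr]
end

section
/- Let z1 ≠ z2 be complex numbers, m ≥ 1 a natural number, and let g be analytic at z1. Then for every n with 0 ≤ n ≤ m−1, (z1−z2)·(1/(m−n−1)!)·D^{m−n−1}( w ↦ g(w)/(w−z2)^{n+1} )(z1) = ((−1)^n/n!)·Σ_{k=0}^{m−n−1} ((n+k)!/(k!(m−n−k−1)!))·g^{(m−n−k−1)}(z1)/(z2−z1)^{n+k}. -/
theorem iteratedDeriv_inv_pow_sub (z2 : ℂ) (n k : ℕ) (w : ℂ) (hw : w - z2 ≠ 0) :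
    iteratedDeriv k (fun w : ℂ => ((w - z2) ^ (n + 1))⁻¹) w
      = (-1) ^ k * ((n + k).factorial / n.factorial : ℂ) / (w - z2) ^ (n + 1 + k) := by
  have a2 : (n.factorial : ℂ) ≠ 0 := by exact_mod_cast n.factorial_ne_zero
  induction k generalizing w with
  | zero => simp [div_self a2]
  | succ k ih =>
    rw [iteratedDeriv_succ]
    have hev : iteratedDeriv k (fun w : ℂ => ((w - z2) ^ (n + 1))⁻¹) =ᶠ[nhds w]
        fun w => (-1) ^ k * ((n + k).factorial / n.factorial : ℂ) / (w - z2) ^ (n + 1 + k) := by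
      have ho : ∀ᶠ v in nhds w, v - z2 ≠ 0 :=
        (by fun_prop : ContinuousAt (fun v : ℂ => v - z2) w).eventually_ne hw
      filter_upwards [ho] with v hv using ih v hv
    rw [hev.deriv_eq]
    have hd : HasDerivAt (fun v : ℂ => (v - z2) ^ (n + 1 + k))
        (((n + 1 + k : ℕ) : ℂ) * (w - z2) ^ (n + 1 + k - 1) * 1) w :=
      ((hasDerivAt_id w).sub_const z2).pow (n + 1 + k)
    have hp : (w - z2) ^ (n + 1 + k) ≠ 0 := pow_ne_zero _ hw
    rw [((hasDerivAt_const w _).fun_div hd hp).deriv]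
    rw [show n + 1 + k - 1 = n + k by omega, ← add_assoc n k 1, Nat.factorial_succ,
      show n + 1 + (k + 1) = n + k + 2 by ring, show n + 1 + k = n + k + 1 by ring]
    push_cast
    field_simp
    ring

/-- Explicit formula for the Taylor–Laurent coefficient `e_n(z1,z2)`:
`(z1−z2)` times the residue at `z1` of `(w−z1)^{n−m}(w−z2)^{−n−1} g(w)` equals the
explicit finite sum. -/
theorem taylorLaurentE_eq_residue
    (z1 z2 : ℂ) (h12 : z1 ≠ z2) (m : ℕ) (hm : 1 ≤ m)
    (g : ℂ → ℂ) (hg : AnalyticAt ℂ g z1)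
    (n : ℕ) (hn : n ≤ m - 1) :
    (z1 - z2) * ((1 / (Nat.factorial (m - n - 1) : ℂ)) *
        iteratedDeriv (m - n - 1) (fun w => g w / (w - z2) ^ (n + 1)) z1)
    = ((-1 : ℂ) ^ n / (Nat.factorial n : ℂ)) *
        ∑ k ∈ Finset.range (m - n),
          ((Nat.factorial (n + k) : ℂ) /
              ((Nat.factorial k : ℂ) * (Nat.factorial (m - n - k - 1) : ℂ))) *
            iteratedDeriv (m - n - k - 1) g z1 / (z2 - z1) ^ (n + k) := by
  have hne : z1 - z2 ≠ 0 := sub_ne_zero.mpr h12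
  obtain ⟨N, rfl⟩ : ∃ N, m = n + N + 1 := ⟨m - n - 1, by omega⟩
  have e1 : n + N + 1 - n = N + 1 := by omega
  have e2 : ∀ k, N + 1 - k - 1 = N - k := fun k => by omega
  simp only [e1, e2, Nat.add_sub_cancel]
  have hf : (fun w => g w / (w - z2) ^ (n + 1))
      = fun w => ((w - z2) ^ (n + 1))⁻¹ * g w := by
    funext w; rw [div_eq_mul_inv, mul_comm]
  have hc : ContDiffAt ℂ N (fun w : ℂ => ((w - z2) ^ (n + 1))⁻¹) z1 := by
    apply ContDiffAt.inv
    · fun_prop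
    · exact pow_ne_zero _ hne
  rw [hf, iteratedDeriv_fun_mul hc hg.contDiffAt, Finset.mul_sum, Finset.mul_sum,
    Finset.mul_sum]
  refine Finset.sum_congr rfl fun k hk => ?_
  have hk' : k ≤ N := by simpa [Nat.lt_succ_iff] using hk
  rw [iteratedDeriv_inv_pow_sub z2 n k z1 hne, Nat.cast_choose ℂ hk']
  have hz : z2 - z1 = (-1) * (z1 - z2) := by ring
  rw [hz, mul_pow, pow_add (-1 : ℂ) n k]
  have a1 : (N.factorial : ℂ) ≠ 0 := by exact_mod_cast N.factorial_ne_zero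
  have a2 : (n.factorial : ℂ) ≠ 0 := by exact_mod_cast n.factorial_ne_zero
  have a3 : (k.factorial : ℂ) ≠ 0 := by exact_mod_cast k.factorial_ne_zero
  have a4 : ((N - k).factorial : ℂ) ≠ 0 := by exact_mod_cast (N - k).factorial_ne_zero
  have b1 : ((-1 : ℂ) ^ k) * (-1) ^ k = 1 := by rw [← mul_pow]; simp
  have b2 : ((-1 : ℂ) ^ k) ≠ 0 := pow_ne_zero _ (by norm_num)
  have b3 : ((-1 : ℂ) ^ n) ≠ 0 := pow_ne_zero _ (by norm_num)
  generalize (-1 : ℂ) ^ k = s at *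
  generalize (-1 : ℂ) ^ n = t at *
  have hs : s = s⁻¹ := eq_inv_of_mul_eq_one_left b1
  rw [show n + 1 + k = (n + k) + 1 by ring, pow_succ (z1 - z2) (n + k)]
  nth_rewrite 1 [hs]
  have a5 : (z1 - z2) ^ (n + k) ≠ 0 := pow_ne_zero _ hne
  generalize (z1 - z2) ^ (n + k) = q at *
  field_simp
end

section
/- Let z1 ≠ z2 be complex numbers, m ≥ 1 a natural number, let g be analytic at z1, and suppose f(z) := g(z)/(z−z1)^m is analytic at z2. Then for every n ≥ 1, (1/(z2−z1)) · [ (1/(n+m−1)!)·D^{n+m−1}( w ↦ g(w)/(w−z2)^{n+1} )(z1) + (1/n!)·D^{n}( w ↦ f(w)/(w−z1)^{n} )(z2) ] = −((−1)^n/n!)·[ Σ_{k=0}^{m+n−1} ((n+k)!/(k!(m+n−k−1)!))·g^{(m+n−k−1)}(z1)/(z2−z1)^{n+k+2} + n·Σ_{k=0}^{n} ((n+k−1)!/(k!(n−k)!))·f^{(n−k)}(z2)/(z1−z2)^{n+k+1} ]. -/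
lemma tl_aux_inv (p k : ℕ) (a z : ℂ) :
    iteratedDeriv k (fun w : ℂ => ((w - a) ^ (p + 1))⁻¹) z
      = (-1) ^ k * ((p + k).factorial : ℂ) / (p.factorial : ℂ) * ((z - a) ^ (p + 1 + k))⁻¹ := by
  have h1 : iteratedDeriv k (fun w : ℂ => ((w - a) ^ (p + 1))⁻¹) z
      = iteratedDeriv k (fun w : ℂ => w ^ (-(p + 1 : ℕ) : ℤ)) (z - a) := by
    have := congrFun (iteratedDeriv_comp_sub_const k (fun w : ℂ => w ^ (-(p + 1 : ℕ) : ℤ)) a) z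
    rw [← this]
    simp only [zpow_neg, zpow_natCast]
  rw [h1, iteratedDeriv_eq_iterate, iter_deriv_zpow]
  have h2 : (-((p + 1 : ℕ) : ℤ) - (k : ℤ)) = -((p + 1 + k : ℕ) : ℤ) := by push_cast; ring
  rw [h2, zpow_neg, zpow_natCast]
  congr 1
  have hp : (p.factorial : ℂ) ≠ 0 := by exact_mod_cast p.factorial_ne_zero
  rw [eq_div_iff hp]
  clear h1 h2
  induction k with
  | zero => simp
  | succ k ih =>
    rw [Finset.prod_range_succ, mul_right_comm, ih, ← add_assoc, Nat.factorial_succ]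
    push_cast
    ring

lemma tl_aux_leibniz (p N : ℕ) (a z : ℂ) (hz : z ≠ a) (h : ℂ → ℂ) (hh : AnalyticAt ℂ h z) :
    (1 / (N.factorial : ℂ)) * iteratedDeriv N (fun w => h w / (w - a) ^ (p + 1)) z
      = ∑ k ∈ Finset.range (N + 1), (-1) ^ k * ((p + k).factorial : ℂ) / (p.factorial : ℂ)
        / ((k.factorial : ℂ) * ((N - k).factorial : ℂ)) * iteratedDeriv (N - k) h z
          / (z - a) ^ (p + 1 + k) := by
  have hza : z - a ≠ 0 := sub_ne_zero.mpr hz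
  have hi : ContDiffAt ℂ N (fun w : ℂ => ((w - a) ^ (p + 1))⁻¹) z := by
    apply ContDiffAt.inv
    · fun_prop
    · exact pow_ne_zero _ hza
  have e : (fun w => h w / (w - a) ^ (p + 1)) = fun w => ((w - a) ^ (p + 1))⁻¹ * h w := by
    funext w; rw [div_eq_mul_inv, mul_comm]
  rw [e, iteratedDeriv_fun_mul hi hh.contDiffAt, Finset.mul_sum]
  refine Finset.sum_congr rfl fun k hk => ?_
  have hk : k ≤ N := by simpa [Nat.lt_succ_iff] using hk
  rw [tl_aux_inv, Nat.cast_choose ℂ hk]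
  have h0 : ∀ j : ℕ, (j.factorial : ℂ) ≠ 0 := fun j => by exact_mod_cast j.factorial_ne_zero
  have := h0 N
  have := h0 k
  have := h0 (N - k)
  have := h0 p
  field_simp

/-- Explicit formula for the Taylor–Laurent coefficient `d_n(z1,z2)`, `n ≥ 1`:
the sum of the residues at `z1` and `z2` of `f(w)(w−z1)^{−n}(w−z2)^{−n−1}` for
`f = g/(w−z1)^m`, divided by `(z2−z1)`, equals the explicit finite double sum. -/
theorem taylorLaurentD_eq_residue_sum
    (z1 z2 : ℂ) (h12 : z1 ≠ z2) (m : ℕ) (hm : 1 ≤ m)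
    (g : ℂ → ℂ) (hg : AnalyticAt ℂ g z1)
    (f : ℂ → ℂ) (hfdef : ∀ w, f w = g w / (w - z1) ^ m)
    (hf2 : AnalyticAt ℂ f z2)
    (n : ℕ) (hn : 1 ≤ n) :
    (1 / (z2 - z1)) *
      ((1 / (Nat.factorial (n + m - 1) : ℂ)) *
          iteratedDeriv (n + m - 1) (fun w => g w / (w - z2) ^ (n + 1)) z1
        + (1 / (Nat.factorial n : ℂ)) *
          iteratedDeriv n (fun w => f w / (w - z1) ^ n) z2)
    = -((-1 : ℂ) ^ n / (Nat.factorial n : ℂ)) *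
        ((∑ k ∈ Finset.range (m + n),
            ((Nat.factorial (n + k) : ℂ) /
                ((Nat.factorial k : ℂ) * (Nat.factorial (m + n - k - 1) : ℂ))) *
              iteratedDeriv (m + n - k - 1) g z1 / (z2 - z1) ^ (n + k + 2))
          + (n : ℂ) * ∑ k ∈ Finset.range (n + 1),
            ((Nat.factorial (n + k - 1) : ℂ) /
                ((Nat.factorial k : ℂ) * (Nat.factorial (n - k) : ℂ))) *
              iteratedDeriv (n - k) f z2 / (z1 - z2) ^ (n + k + 1)) := by
  have h0 : ∀ j : ℕ, (j.factorial : ℂ) ≠ 0 := fun j => by exact_mod_cast j.factorial_ne_zero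
  have ha : z2 - z1 ≠ 0 := sub_ne_zero.mpr h12.symm
  obtain ⟨q, rfl⟩ : ∃ q, n = q + 1 := ⟨n - 1, by omega⟩
  rw [tl_aux_leibniz (q + 1) _ z2 z1 h12 g hg, tl_aux_leibniz q _ z1 z2 h12.symm f hf2]
  have hN : q + 1 + m - 1 + 1 = m + (q + 1) := by omega
  rw [hN, mul_add, mul_add, Finset.mul_sum, Finset.mul_sum, Finset.mul_sum, Finset.mul_sum,
    Finset.mul_sum]
  have hs : z1 - z2 = -(z2 - z1) := by ring
  rw [hs]
  generalize z2 - z1 = d at ha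
  have hsq : ∀ k : ℕ, ((-1 : ℂ) ^ k) ≠ 0 := fun k => pow_ne_zero _ (by norm_num)
  have hsq2 : ∀ k : ℕ, ((-1 : ℂ) ^ k) * (-1) ^ k = 1 := fun k => by
    rw [← mul_pow]; norm_num
  have hinv : ∀ k : ℕ, ∀ x : ℂ, x / (-d) ^ k = (-1) ^ k * (x / d ^ k) := fun k x => by
    rw [neg_pow d, div_eq_iff (mul_ne_zero (hsq k) (pow_ne_zero _ ha))]
    have := pow_ne_zero k ha
    field_simp
    linear_combination (-x) * hsq2 k
  congr 1
  · refine Finset.sum_congr rfl fun k hk => ?_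
    have e1 : q + 1 + m - 1 - k = m + (q + 1) - k - 1 := by omega
    rw [e1, hinv]
    have := h0 (m + (q + 1) - k - 1)
    have := h0 k
    have := h0 (q + 1)
    have e2 : (-1 : ℂ) ^ (q + 1 + 1 + k) = (-1) ^ q * (-1) ^ k := by ring
    rw [e2]
    field_simp
    linear_combination ((q + 1 + k).factorial * iteratedDeriv (m + (q + 1) - k - 1) g z1 * d ^ 3 * d ^ q * d ^ k *
      (-1) ^ q) * hsq2 k
  · refine Finset.sum_congr rfl fun k hk => ?_
    have e1 : q + 1 + k - 1 = q + k := by omega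
    rw [e1, hinv]
    have := h0 (q + 1 - k)
    have := h0 k
    have := h0 q
    have hq : (q : ℂ) + 1 ≠ 0 := by exact_mod_cast q.succ_ne_zero
    have e2 : (-1 : ℂ) ^ (q + 1 + k + 1) = (-1) ^ q * (-1) ^ k := by ring
    rw [e2, Nat.factorial_succ]
    push_cast
    field_simp
    linear_combination (-((q + k).factorial * iteratedDeriv (q + 1 - k) f z2 * d ^ 2 * d ^ q * d ^ k)) *
      hsq2 q
end

section
/- Let Ω ⊆ ℂ be open, z1, z2 ∈ Ω with z1 ≠ z2, m1, m2 ≥ 1 natural numbers, let h : ℂ → ℂ be analytic on Ω, and define f(z) = h(z)/((z−z1)^{m1}(z−z2)^{m2}) on Ω \ {z1, z2}. Let M = max(m1, m2) and define G(z) = f(z) − Σ_{n=0}^{M−1} [c_n(z1,z2)(z−z1) + c_n(z2,z1)(z−z2)]·((z−z1)(z−z2))^{−n−1} on Ω \ {z1, z2}, with c_n as below. Then G extends to a function analytic on all of Ω (the singularities of G at z1 and z2 are removable). -/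
/-- The two-point Laurent coefficient `c_n(z1,z2)`; empty sums (negative upper limit)
are zero, which is automatic from `Finset.range` with truncated subtraction. -/
noncomputable def twoPointLaurentC (g1 g2 : ℂ → ℂ) (z1 z2 : ℂ) (m1 m2 : ℕ) (n : ℕ) : ℂ :=
  -(∑ k ∈ Finset.range (m1 - n - 1),
      (Nat.factorial k : ℂ) * (Nat.choose (m1 - n - 2) k : ℂ) * (Nat.choose n k : ℂ) *
        (z1 - z2) ^ ((n : ℤ) - k - 1) *
        iteratedDeriv (m1 - n - k - 2) g1 z1 / (Nat.factorial (m1 - n - 2) : ℂ))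
  + (∑ k ∈ Finset.range (m2 - n),
      (Nat.factorial k : ℂ) * (Nat.choose (m2 - n - 1) k : ℂ) * (Nat.choose (n + 1) k : ℂ) *
        (z2 - z1) ^ ((n : ℤ) - k) *
        iteratedDeriv (m2 - n - k - 1) g2 z2 / (Nat.factorial (m2 - n - 1) : ℂ))

section TplHelpers
open Finset

lemma tpl_B (d u : ℂ) (hd : d ≠ 0) (hu : u ≠ 0) (q : ℕ) :
    u * ∑ p ∈ antidiagonal (q+2), ((p.1.choose p.2 : ℕ) : ℂ) * d ^ ((p.1:ℤ) - p.2) * u ^ (-(p.1:ℤ) - 1)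
    = d * (∑ p ∈ antidiagonal (q+1), ((p.1.choose p.2 : ℕ) : ℂ) * d ^ ((p.1:ℤ) - p.2) * u ^ (-(p.1:ℤ) - 1))
     + ∑ p ∈ antidiagonal q, ((p.1.choose p.2 : ℕ) : ℂ) * d ^ ((p.1:ℤ) - p.2) * u ^ (-(p.1:ℤ) - 1) := by
  have hu1 : ∀ n : ℕ, u * u ^ (-((n+1 : ℕ):ℤ) - 1) = u ^ (-(n:ℤ) - 1) := by
    intro n
    rw [← zpow_one_add₀ hu]; congr 1; push_cast; ring
  have hd1 : ∀ n k : ℕ, d ^ (((n+1:ℕ):ℤ) - k) = d * d ^ ((n:ℤ) - k) := by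
    intro n k
    rw [← zpow_one_add₀ hd]; congr 1; push_cast; ring
  have hd2 : ∀ n k : ℕ, d ^ (((n+1:ℕ):ℤ) - ((k+1:ℕ):ℤ)) = d ^ ((n:ℤ) - k) := by
    intro n k
    congr 1; push_cast; ring
  rw [Nat.sum_antidiagonal_succ]
  simp only [Nat.choose_zero_succ, Nat.cast_zero, zero_mul, zero_add, mul_sum]
  rw [Nat.sum_antidiagonal_succ', Nat.sum_antidiagonal_succ' (n := q)]
  rw [add_assoc (d * _)]
  erw [← sum_add_distrib]
  congr 1
  · rw [← hu1 (q+1), hd1]; simp; ring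
  · refine sum_congr rfl fun p _ => ?_
    dsimp only
    rw [← hu1 p.1, Nat.choose_succ_succ]
    rw [← hd2 p.1 p.2, hd1]
    push_cast
    ring

lemma tpl_E (d t : ℂ) (hd : d ≠ 0) (ht : t ≠ 0) (htd : t + d ≠ 0) (q : ℕ) :
    (t + d) * (∑ p ∈ antidiagonal (q+1), ((p.1.choose p.2 : ℕ) : ℂ) * d ^ ((p.1:ℤ) - p.2) * (t*(t+d)) ^ (-(p.1:ℤ) - 1))
     + ∑ p ∈ antidiagonal q, ((p.1.choose p.2 : ℕ) : ℂ) * d ^ ((p.1:ℤ) - p.2) * (t*(t+d)) ^ (-(p.1:ℤ) - 1)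
     = (t ^ (q+2))⁻¹ := by
  induction q with
  | zero =>
    have h : (-1:ℤ) - 1 = -2 := by norm_num
    simp [Nat.sum_antidiagonal_succ, h, zpow_neg]
    field_simp
    ring
  | succ q ih =>
    have := tpl_B d (t*(t+d)) hd (mul_ne_zero ht htd) q
    have h2 : (t ^ (q+1+2))⁻¹ = t⁻¹ * (t ^ (q+2))⁻¹ := by rw [← mul_inv]; ring
    rw [h2, ← ih, eq_inv_mul_iff_mul_eq₀ ht]
    linear_combination this

/-- full kernel -/
lemma tpl_F (d t : ℂ) (hd : d ≠ 0) (ht : t ≠ 0) (htd : t + d ≠ 0) (q : ℕ) :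
    ∑ p ∈ antidiagonal q, (((p.1+1).choose p.2 : ℕ) : ℂ) * d ^ ((p.1:ℤ) - p.2) * (t+d) * (t*(t+d)) ^ (-(p.1:ℤ) - 1)
     - (if q = 0 then 0 else ∑ p ∈ antidiagonal (q-1), ((p.1.choose p.2 : ℕ) : ℂ) * d ^ ((p.1:ℤ) - p.2 - 1) * t * (t*(t+d)) ^ (-(p.1:ℤ) - 1))
     = (t ^ (q+1))⁻¹ := by
  cases q with
  | zero => 
    simp
    field_simp
  | succ q =>
    rw [← tpl_E d t hd ht htd q]
    simp only [Nat.succ_ne_zero, if_false, Nat.add_sub_cancel, Nat.sum_antidiagonal_succ']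
    rw [add_sub_assoc, ← sum_sub_distrib, mul_add (t+d), mul_sum, add_assoc ((t+d) * _), ← sum_add_distrib]
    congr 1
    · simp; ring
    · refine sum_congr rfl fun p _ => ?_
      have : d ^ ((p.1:ℤ) - p.2) = d * d ^ ((p.1:ℤ) - p.2 - 1) := by
        rw [← zpow_one_add₀ hd]; congr 1; ring
      have h' : d ^ ((p.1:ℤ) - ((p.2+1:ℕ):ℤ)) = d ^ ((p.1:ℤ) - p.2 - 1) := by
        congr 1; push_cast; ring
      rw [this, h', Nat.choose_succ_succ]
      push_cast
      ring

lemma tpl_flip (F : ℕ → ℕ → ℂ) (M m : ℕ) (h : m ≤ M) :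
    ∑ n ∈ range M, ∑ k ∈ range (m - n), F n k = ∑ q ∈ range m, ∑ p ∈ antidiagonal q, F p.1 p.2 := by
  obtain ⟨r, rfl⟩ := Nat.exists_eq_add_of_le h
  rw [sum_range_add]
  rw [sum_eq_zero (s := range r) (fun x _ => by simp)]
  rw [add_zero]
  rw [← sum_range_diag_flip]
  refine sum_congr rfl fun q _ => ?_
  rw [Nat.sum_antidiagonal_eq_sum_range_succ_mk]

/-- principal part identity -/
lemma tpl_S (d t : ℂ) (hd : d ≠ 0) (ht : t ≠ 0) (htd : t + d ≠ 0) (M m : ℕ) (h : m ≤ M) (a : ℕ → ℂ) :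
    ∑ n ∈ range M, ((∑ k ∈ range (m - n), (((n+1).choose k : ℕ) : ℂ) * d ^ ((n:ℤ) - k) * a (m - n - k - 1)) * (t+d)
       - (∑ k ∈ range (m - n - 1), ((n.choose k : ℕ) : ℂ) * d ^ ((n:ℤ) - k - 1) * a (m - n - k - 2)) * t) *
         (t*(t+d)) ^ (-(n:ℤ) - 1)
     = ∑ q ∈ range m, a (m - q - 1) * (t ^ (q+1))⁻¹ := by
  simp only [sub_mul, sum_sub_distrib, sum_mul]
  have h1 := tpl_flip (fun n k => (((n+1).choose k : ℕ) : ℂ) * d ^ ((n:ℤ) - k) * a (m - n - k - 1) * (t+d) * (t*(t+d)) ^ (-(n:ℤ) - 1)) M m h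
  have h2 := tpl_flip (fun n k => ((n.choose k : ℕ) : ℂ) * d ^ ((n:ℤ) - k - 1) * a (m - n - k - 2) * t * (t*(t+d)) ^ (-(n:ℤ) - 1)) M (m-1) (by omega)
  rw [h1]
  simp only [Nat.sub_right_comm m _ 1] at *
  rw [h2]
  cases m with
  | zero => simp
  | succ m =>
    simp only [Nat.add_sub_cancel]
    have h3 : ∑ q ∈ range m, ∑ p ∈ antidiagonal q, ((p.1.choose p.2 : ℕ) : ℂ) * d ^ ((p.1:ℤ) - p.2 - 1) * a (m + 1 - p.1 - p.2 - 2) * t * (t*(t+d)) ^ (-(p.1:ℤ) - 1)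
      = ∑ q ∈ range (m+1), a (m - q) * (if q = 0 then 0 else ∑ p ∈ antidiagonal (q-1), ((p.1.choose p.2 : ℕ) : ℂ) * d ^ ((p.1:ℤ) - p.2 - 1) * t * (t*(t+d)) ^ (-(p.1:ℤ) - 1)) := by
      rw [sum_range_succ']
      simp only [Nat.succ_ne_zero, if_false, if_true, mul_zero, add_zero, Nat.add_sub_cancel, mul_sum]
      refine sum_congr rfl fun q _ => sum_congr rfl fun p hp => ?_
      rw [HasAntidiagonal.mem_antidiagonal] at hp
      have : m + 1 - p.1 - p.2 - 2 = m - (q+1) := by omega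
      rw [this]; ring
    rw [h3, ← sum_sub_distrib]
    refine sum_congr rfl fun q _ => ?_
    rw [← tpl_F d t hd ht htd q, mul_sub, mul_sum]
    congr 1
    refine sum_congr rfl fun p hp => ?_
    rw [HasAntidiagonal.mem_antidiagonal] at hp
    have : m + 1 - p.1 - p.2 - 1 = m - q := by omega
    rw [this]
    ring

lemma tpl_C (g1 g2 : ℂ → ℂ) (z1 z2 : ℂ) (m1 m2 n : ℕ) :
    twoPointLaurentC g1 g2 z1 z2 m1 m2 n =
    -(∑ k ∈ range (m1 - n - 1), ((n.choose k : ℕ) : ℂ) * (z1 - z2) ^ ((n:ℤ) - k - 1) *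
        (iteratedDeriv (m1 - n - k - 2) g1 z1 / ((m1 - n - k - 2).factorial : ℂ)))
    + ∑ k ∈ range (m2 - n), (((n+1).choose k : ℕ) : ℂ) * (z2 - z1) ^ ((n:ℤ) - k) *
        (iteratedDeriv (m2 - n - k - 1) g2 z2 / ((m2 - n - k - 1).factorial : ℂ)) := by
  have key : ∀ N k : ℕ, k ≤ N → ∀ x y D : ℂ, (k.factorial : ℂ) * (N.choose k : ℂ) * x * y * D / (N.factorial : ℂ)
      = x * y * (D / ((N - k).factorial : ℂ)) := by
    intro N k hk x y D
    have h1 : (N.choose k : ℂ) * k.factorial * (N-k).factorial = N.factorial := by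
      exact_mod_cast Nat.choose_mul_factorial_mul_factorial hk
    have h2 : (N.factorial : ℂ) ≠ 0 := by exact_mod_cast N.factorial_ne_zero
    have h3 : ((N-k).factorial : ℂ) ≠ 0 := by exact_mod_cast (N-k).factorial_ne_zero
    rw [mul_div_assoc', div_eq_div_iff h2 h3, ← h1]
    ring
  unfold twoPointLaurentC
  congr 1
  · congr 1
    refine sum_congr rfl fun k hk => ?_
    rw [mem_range] at hk
    rw [key _ _ (by omega)]
    rw [show m1 - n - 2 - k = m1 - n - k - 2 by omega]
  · refine sum_congr rfl fun k hk => ?_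
    rw [mem_range] at hk
    rw [key _ _ (by omega)]
    rw [show m2 - n - 1 - k = m2 - n - k - 1 by omega]

noncomputable def tplS (g : ℂ → ℂ) (z : ℂ) (m : ℕ) (w : ℂ) : ℂ :=
  ∑ q ∈ range m, (iteratedDeriv (m - q - 1) g z / ((m - q - 1).factorial : ℂ)) * ((w - z) ^ (q+1))⁻¹

lemma tpl_sum (g1 g2 : ℂ → ℂ) (z1 z2 : ℂ) (h12 : z1 ≠ z2) (m1 m2 : ℕ) (w : ℂ) (h1 : w ≠ z1) (h2 : w ≠ z2) :
    ∑ n ∈ Finset.range (max m1 m2),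
      (twoPointLaurentC g1 g2 z1 z2 m1 m2 n * (w - z1)
        + twoPointLaurentC g2 g1 z2 z1 m2 m1 n * (w - z2)) *
        ((w - z1) * (w - z2)) ^ (-(n : ℤ) - 1) = tplS g1 z1 m1 w + tplS g2 z2 m2 w := by
  have e1 := tpl_S (z1 - z2) (w - z1) (sub_ne_zero.2 h12) (sub_ne_zero.2 h1)
    (by simpa using sub_ne_zero.2 h2) (max m1 m2) m1 (le_max_left _ _)
    (fun i => iteratedDeriv i g1 z1 / (i.factorial : ℂ))
  have e2 := tpl_S (z2 - z1) (w - z2) (sub_ne_zero.2 h12.symm) (sub_ne_zero.2 h2)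
    (by simpa using sub_ne_zero.2 h1) (max m1 m2) m2 (le_max_right _ _)
    (fun i => iteratedDeriv i g2 z2 / (i.factorial : ℂ))
  unfold tplS
  rw [← e1, ← e2, ← sum_add_distrib]
  refine sum_congr rfl fun n _ => ?_
  rw [tpl_C, tpl_C, sub_add_sub_cancel, sub_add_sub_cancel, mul_comm (w - z2) (w - z1)]
  ring

lemma tplS_diff (g : ℂ → ℂ) (z : ℂ) (m : ℕ) (w : ℂ) (hw : w ≠ z) : DifferentiableAt ℂ (tplS g z m) w := by
  unfold tplS
  refine DifferentiableAt.fun_sum fun q _ => ?_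
  have : (w - z) ^ (q+1) ≠ 0 := pow_ne_zero _ (sub_ne_zero.2 hw)
  fun_prop (disch := assumption)

lemma tpl_taylor (g : ℂ → ℂ) (z : ℂ) (m : ℕ) (hg : AnalyticAt ℂ g z) :
    ∃ φ : ℂ → ℂ, DifferentiableAt ℂ φ z ∧ ∀ w, w ≠ z → g w / (w - z) ^ m = tplS g z m w + φ w := by
  have hg' : AnalyticAt ℂ (fun x => g (x + z)) 0 := by
    apply AnalyticAt.comp' (g := g) (f := fun x => x + z)
    · simpa using hg
    · fun_prop
  obtain ⟨F, hF, hE⟩ := hg'.exists_eq_sum_add_pow_mul m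
  refine ⟨fun w => F (w - z), ?_, fun w hw => ?_⟩
  · have : DifferentiableAt ℂ F (z - z) := by simpa using hF.differentiableAt
    exact DifferentiableAt.comp (g := F) (f := fun w => w - z) z this (by fun_prop)
  · have ht : w - z ≠ 0 := sub_ne_zero.2 hw
    have := hE (w - z)
    simp only [sub_add_cancel, smul_eq_mul, iteratedDeriv_comp_add_const, zero_add] at this
    rw [this, add_div, mul_div_cancel_left₀ _ (pow_ne_zero _ ht)]
    congr 1
    unfold tplS
    rw [sum_div, ← sum_range_reflect]
    refine sum_congr rfl fun q hq => ?_
    rw [mem_range] at hq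
    have : (w - z) ^ m = (w - z) ^ (m - 1 - q) * (w - z) ^ (q+1) := by
      rw [← pow_add]; congr 1; omega
    rw [this, show m - q - 1 = m - 1 - q by omega]
    field_simp

end TplHelpers

/-- Subtracting the singular part (built from the `c_n` coefficients) of the two-point
Laurent expansion of `f = h/((z−z1)^{m1}(z−z2)^{m2})` leaves a function whose
singularities at `z1` and `z2` are removable: it extends analytically to all of `Ω`. -/
theorem twoPointLaurent_removable
    (Ω : Set ℂ) (hΩ : IsOpen Ω) (h : ℂ → ℂ) (hh : DifferentiableOn ℂ h Ω)
    (z1 z2 : ℂ) (hz1 : z1 ∈ Ω) (hz2 : z2 ∈ Ω) (h12 : z1 ≠ z2)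
    (m1 m2 : ℕ) (hm1 : 1 ≤ m1) (hm2 : 1 ≤ m2)
    (f g1 g2 : ℂ → ℂ)
    (hfdef : ∀ w, f w = h w / ((w - z1) ^ m1 * (w - z2) ^ m2))
    (hg1def : ∀ w, g1 w = h w / (w - z2) ^ m2)
    (hg2def : ∀ w, g2 w = h w / (w - z1) ^ m1)
    (G : ℂ → ℂ)
    (hGdef : ∀ w, G w = f w - ∑ n ∈ Finset.range (max m1 m2),
      (twoPointLaurentC g1 g2 z1 z2 m1 m2 n * (w - z1)
        + twoPointLaurentC g2 g1 z2 z1 m2 m1 n * (w - z2)) *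
        ((w - z1) * (w - z2)) ^ (-(n : ℤ) - 1)) :
    ∃ G' : ℂ → ℂ, DifferentiableOn ℂ G' Ω ∧ ∀ w ∈ Ω \ {z1, z2}, G' w = G w := by
  have hG : ∀ w, w ≠ z1 → w ≠ z2 → G w = f w - (tplS g1 z1 m1 w + tplS g2 z2 m2 w) := by
    intro w h1 h2
    rw [hGdef, tpl_sum g1 g2 z1 z2 h12 m1 m2 w h1 h2]
  have hhA : ∀ w ∈ Ω, AnalyticAt ℂ h w := fun w hw => hh.analyticAt (hΩ.mem_nhds hw)
  have hA1 : AnalyticAt ℂ g1 z1 := by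
    rw [show g1 = fun w => h w / (w - z2) ^ m2 from funext hg1def]
    exact (hhA z1 hz1).fun_div (by fun_prop) (pow_ne_zero _ (sub_ne_zero.2 h12))
  have hA2 : AnalyticAt ℂ g2 z2 := by
    rw [show g2 = fun w => h w / (w - z1) ^ m1 from funext hg2def]
    exact (hhA z2 hz2).fun_div (by fun_prop) (pow_ne_zero _ (sub_ne_zero.2 h12.symm))
  obtain ⟨φ1, hφ1, hE1⟩ := tpl_taylor g1 z1 m1 hA1
  obtain ⟨φ2, hφ2, hE2⟩ := tpl_taylor g2 z2 m2 hA2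
  have hG1 : ∀ w, w ≠ z1 → w ≠ z2 → G w = φ1 w - tplS g2 z2 m2 w := by
    intro w h1 h2
    have : f w = g1 w / (w - z1) ^ m1 := by
      rw [hfdef, hg1def, div_div, mul_comm]
    rw [hG w h1 h2, this, hE1 w h1]; ring
  have hG2 : ∀ w, w ≠ z1 → w ≠ z2 → G w = φ2 w - tplS g1 z1 m1 w := by
    intro w h1 h2
    have : f w = g2 w / (w - z2) ^ m2 := by
      rw [hfdef, hg2def, div_div]
    rw [hG w h1 h2, this, hE2 w h2]; ring
  classical
  refine ⟨fun w => if w = z1 then φ1 w - tplS g2 z2 m2 w else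
    if w = z2 then φ2 w - tplS g1 z1 m1 w else G w, fun w hw => ?_, fun w hw => ?_⟩
  · apply DifferentiableAt.differentiableWithinAt
    by_cases h1 : w = z1
    · subst h1
      refine (hφ1.fun_sub (tplS_diff g2 z2 m2 w h12)).congr_of_eventuallyEq ?_
      filter_upwards [isOpen_ne.mem_nhds h12] with x hx
      have hx : x ≠ z2 := hx
      by_cases hx1 : x = w
      · simp [hx1]
      · simp [hx1, hx, hG1 x hx1 hx]
    · by_cases h2 : w = z2
      · subst h2
        refine (hφ2.fun_sub (tplS_diff g1 z1 m1 w h12.symm)).congr_of_eventuallyEq ?_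
        filter_upwards [isOpen_ne.mem_nhds h12.symm] with x hx
        have hx : x ≠ z1 := hx
        by_cases hx1 : x = w
        · subst hx1; simp [hx]
        · simp [hx1, hx, hG2 x hx hx1]
      · have hf : DifferentiableAt ℂ f w := by
          rw [show f = fun w => h w / ((w - z1) ^ m1 * (w - z2) ^ m2) from funext hfdef]
          exact (hhA w hw).differentiableAt.fun_div (by fun_prop)
            (mul_ne_zero (pow_ne_zero _ (sub_ne_zero.2 h1)) (pow_ne_zero _ (sub_ne_zero.2 h2)))
        refine (hf.fun_sub ((tplS_diff g1 z1 m1 w h1).fun_add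
          (tplS_diff g2 z2 m2 w h2))).congr_of_eventuallyEq ?_
        filter_upwards [isOpen_ne.mem_nhds h1, isOpen_ne.mem_nhds h2] with x hx1 hx2
        have hx1 : x ≠ z1 := hx1
        have hx2 : x ≠ z2 := hx2
        simp [hx1, hx2, hG x hx1 hx2]
  · have h1 : w ≠ z1 := fun e => hw.2 (by simp [e])
    have h2 : w ≠ z2 := fun e => hw.2 (by simp [e])
    simp [h1, h2]
end

section
/- Let Ω ⊆ ℂ be open, z1, z2 ∈ Ω with z1 ≠ z2, m ≥ 1 a natural number, let g : ℂ → ℂ be analytic on Ω, and define f(z) = g(z)/(z−z1)^m on Ω \ {z1}. Define G(z) = f(z) − Σ_{n=0}^{m−1} e_n(z1,z2)·(z−z1)^{−n−1}·(z−z2)^{n} on Ω \ {z1}, with e_n as below. Then G extends to a function analytic on all of Ω (the singularity of G at z1 is removable). -/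
/-- The Taylor–Laurent coefficient `e_n(z1,z2)`. -/
noncomputable def taylorLaurentE (g : ℂ → ℂ) (z1 z2 : ℂ) (m : ℕ) (n : ℕ) : ℂ :=
  ((-1 : ℂ) ^ n / (Nat.factorial n : ℂ)) *
    ∑ k ∈ Finset.range (m - n),
      ((Nat.factorial (n + k) : ℂ) /
          ((Nat.factorial k : ℂ) * (Nat.factorial (m - n - k - 1) : ℂ))) *
        iteratedDeriv (m - n - k - 1) g z1 / (z2 - z1) ^ (n + k)

theorem tl_taylor (g : ℂ → ℂ) (z1 w : ℂ) (m : ℕ) :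
    g w = ∑ j ∈ Finset.range m, ((Function.swap dslope z1)^[j] g) z1 * (w - z1) ^ j
      + (w - z1) ^ m * ((Function.swap dslope z1)^[m] g) w := by
  induction m with
  | zero => simp
  | succ m ih =>
    rw [Finset.sum_range_succ, Function.iterate_succ_apply']
    have h := sub_smul_dslope ((Function.swap dslope z1)^[m] g) z1 w
    simp only [smul_eq_mul] at h
    change (w - z1) * (Function.swap dslope z1 ((Function.swap dslope z1)^[m] g) w) = _ at h
    rw [pow_succ, mul_assoc, h]
    linear_combination ih

theorem tl_diff (Ω : Set ℂ) (hΩ : IsOpen Ω) (g : ℂ → ℂ) (hg : DifferentiableOn ℂ g Ω)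
    (z1 : ℂ) (hz1 : z1 ∈ Ω) (m : ℕ) :
    DifferentiableOn ℂ ((Function.swap dslope z1)^[m] g) Ω := by
  induction m with
  | zero => simpa
  | succ m ih =>
    rw [Function.iterate_succ_apply']
    exact (Complex.differentiableOn_dslope (hΩ.mem_nhds hz1)).2 ih

theorem tl_coeff (g : ℂ → ℂ) (z1 : ℂ) (hg : AnalyticAt ℂ g z1) (j : ℕ) :
    ((Function.swap dslope z1)^[j] g) z1 = iteratedDeriv j g z1 / (Nat.factorial j : ℂ) := by
  have h := hg.hasFPowerSeriesAt
  have h2 := (h.has_fpower_series_iterate_dslope_fslope j).coeff_zero 1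
  rw [← h2]
  change FormalMultilinearSeries.coeff _ 0 = _
  rw [FormalMultilinearSeries.coeff_iterate_fslope]
  simp [FormalMultilinearSeries.coeff_ofScalars]

theorem tl_E (g : ℂ → ℂ) (z1 z2 : ℂ) (m n : ℕ) (hn : n < m) :
    taylorLaurentE g z1 z2 m n = ∑ p ∈ Finset.range m,
      (-1) ^ n * (p.choose n : ℂ) *
        (iteratedDeriv (m - 1 - p) g z1 / (Nat.factorial (m - 1 - p) : ℂ)) / (z2 - z1) ^ p := by
  obtain ⟨q, rfl⟩ := Nat.exists_eq_add_of_lt hn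
  rw [add_assoc, Finset.sum_range_add, Finset.sum_eq_zero (s := Finset.range n), zero_add]
  · unfold taylorLaurentE
    rw [Nat.add_sub_cancel_left, Finset.mul_sum]
    refine Finset.sum_congr rfl fun k hk => ?_
    have e1 : q + 1 - k - 1 = q - k := by omega
    have e2 : n + (q + 1) - 1 - (n + k) = q - k := by omega
    rw [e1, e2, Nat.cast_add_choose]
    have := Nat.factorial_ne_zero n
    have := Nat.factorial_ne_zero k
    have := Nat.factorial_ne_zero (q - k)
    field_simp
  · intro p hp
    rw [Nat.choose_eq_zero_of_lt (Finset.mem_range.1 hp)]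
    simp

theorem tl_inner (u d a : ℂ) (hu : u ≠ 0) (hd : d ≠ 0) (m p : ℕ) (hp : p < m) :
    ∑ n ∈ Finset.range m, (-1) ^ n * (p.choose n : ℂ) * a / d ^ p * u ^ (-(n : ℤ) - 1)
      * (u - d) ^ n = a * u ^ (m - 1 - p) / u ^ m := by
  obtain ⟨q, rfl⟩ := Nat.exists_eq_add_of_lt hp
  have e : p + q + 1 - 1 - p = q := by omega
  have h : (d / u) ^ p = ∑ n ∈ Finset.range (p + 1), (-(u - d) / u) ^ n * (p.choose n : ℂ) := by
    have := add_pow (-(u - d) / u) 1 p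
    simp only [one_pow, mul_one] at this
    rw [← this]
    congr 1
    field_simp
    ring
  rw [e, show p + q + 1 = (p + 1) + q by ring, Finset.sum_range_add,
    Finset.sum_eq_zero (s := Finset.range q), add_zero]
  · have : a * u ^ q / u ^ (p + 1 + q) = a / d ^ p * u⁻¹ * (d / u) ^ p := by
      rw [div_pow, pow_add, pow_succ]
      field_simp
    rw [this, h, Finset.mul_sum]
    refine Finset.sum_congr rfl fun n _ => ?_
    rw [zpow_sub₀ hu, zpow_neg, zpow_natCast, zpow_one, div_pow, neg_pow (u - d) n]
    field_simp
  · intro n _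
    rw [Nat.choose_eq_zero_of_lt (by omega)]
    simp

theorem taylorLaurent_removable
    (Ω : Set ℂ) (hΩ : IsOpen Ω) (g : ℂ → ℂ) (hg : DifferentiableOn ℂ g Ω)
    (z1 z2 : ℂ) (hz1 : z1 ∈ Ω) (hz2 : z2 ∈ Ω) (h12 : z1 ≠ z2)
    (m : ℕ) (hm : 1 ≤ m)
    (f : ℂ → ℂ) (hfdef : ∀ w, f w = g w / (w - z1) ^ m)
    (G : ℂ → ℂ)
    (hGdef : ∀ w, G w = f w - ∑ n ∈ Finset.range m,
      taylorLaurentE g z1 z2 m n * (w - z1) ^ (-(n : ℤ) - 1) * (w - z2) ^ n) :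
    ∃ G' : ℂ → ℂ, DifferentiableOn ℂ G' Ω ∧ ∀ w ∈ Ω \ {z1}, G' w = G w := by
  refine ⟨(Function.swap dslope z1)^[m] g, tl_diff Ω hΩ g hg z1 hz1 m, ?_⟩
  rintro w ⟨_, hw⟩
  have hu : w - z1 ≠ 0 := sub_ne_zero.2 hw
  have hd : z2 - z1 ≠ 0 := sub_ne_zero.2 h12.symm
  have han : AnalyticAt ℂ g z1 := hg.analyticAt (hΩ.mem_nhds hz1)
  have hS : ∑ n ∈ Finset.range m,
      taylorLaurentE g z1 z2 m n * (w - z1) ^ (-(n : ℤ) - 1) * (w - z2) ^ n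
      = (∑ j ∈ Finset.range m, ((Function.swap dslope z1)^[j] g) z1 * (w - z1) ^ j)
        / (w - z1) ^ m := by
    rw [← Finset.sum_range_reflect (fun j => ((Function.swap dslope z1)^[j] g) z1 * (w - z1) ^ j),
      Finset.sum_div]
    have : ∀ n ∈ Finset.range m,
        taylorLaurentE g z1 z2 m n * (w - z1) ^ (-(n : ℤ) - 1) * (w - z2) ^ n =
        ∑ p ∈ Finset.range m, (-1) ^ n * (p.choose n : ℂ) *
          (iteratedDeriv (m - 1 - p) g z1 / (Nat.factorial (m - 1 - p) : ℂ)) / (z2 - z1) ^ p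
          * (w - z1) ^ (-(n : ℤ) - 1) * ((w - z1) - (z2 - z1)) ^ n := by
      intro n hn
      rw [tl_E g z1 z2 m n (Finset.mem_range.1 hn), Finset.sum_mul, Finset.sum_mul,
        sub_sub_sub_cancel_right]
    rw [Finset.sum_congr rfl this, Finset.sum_comm]
    refine Finset.sum_congr rfl fun p hp => ?_
    rw [tl_inner _ _ _ hu hd m p (Finset.mem_range.1 hp), tl_coeff g z1 han]
  rw [hGdef, hfdef, hS, ← sub_div, eq_div_iff (pow_ne_zero _ hu)]
  linear_combination -tl_taylor g z1 w m
end

section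
/- Let c ∈ ℂ, R > 0, and let f : ℂ → ℂ be analytic on an open set containing the closed disk of center c and radius R. Let z1, z2 be distinct points of the open disk of center c and radius R. Then for every n ≥ 0, the two-point Taylor coefficient a_n(z1,z2) satisfies a_n(z1,z2) = (1/(2πi(z2−z1))) · ∮_{|w−c|=R} f(w)/((w−z1)^n (w−z2)^{n+1}) dw, where the integral is the circle integral over the circle of center c and radius R traversed counterclockwise. -/
namespace TwoPt
open Finset
lemma pf_poly (p q : ℕ) (X Y : ℂ) (h : X + Y = 1) :
    ∑ i ∈ range (p+1), ((q+i).choose i : ℂ) * X^i * Y^(q+1)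
     + ∑ j ∈ range (q+1), ((p+j).choose j : ℂ) * Y^j * X^(p+1) = 1 := by
  induction p with
  | zero =>
    have hX : X = 1 - Y := by linear_combination h
    have := mul_neg_geom_sum Y (q+1)
    simp only [zero_add, sum_range_one, Nat.choose_self, Nat.choose_zero_right, pow_zero, pow_one,
      Nat.cast_one, one_mul, mul_one, ← Finset.sum_mul]
    rw [hX]; linear_combination this
  | succ p ih =>
    have key : ∀ m : ℕ, ∑ j ∈ range (m+1), ((p+1+j).choose j : ℂ) * Y^j * X^(p+1+1)
       = ∑ j ∈ range (m+1), ((p+j).choose j : ℂ) * Y^j * X^(p+1)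
         - ((m+(p+1)).choose (p+1) : ℂ) * X^(p+1) * Y^(m+1) := by
      intro m
      have hX : X = 1 - Y := by linear_combination h
      induction m with
      | zero => simp; rw [pow_succ]; linear_combination X^(p+1) * hX
      | succ m im =>
        rw [sum_range_succ, im, sum_range_succ _ (m+1)]
        have e1 : ((m+1+(p+1)).choose (p+1) : ℂ) = ((p+1+(m+1)).choose (m+1) : ℂ) := by
          rw [add_comm, Nat.choose_symm_add]
        have e2 : ((p+1+(m+1)).choose (m+1) : ℂ) =
            ((m+(p+1)).choose (p+1) : ℂ) + ((p+(m+1)).choose (m+1) : ℂ) := by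
          have : (m+(p+1)).choose (p+1) = (p+(m+1)).choose m := by
            rw [Nat.choose_symm_add.symm]; congr 1; omega
          rw [this, show p+1+(m+1) = (p+(m+1))+1 by ring, Nat.choose_succ_succ]; push_cast; ring
        rw [e1, e2, pow_succ X (p+1)]
        generalize ((m+(p+1)).choose (p+1) : ℂ) = A
        generalize ((p+(m+1)).choose (m+1) : ℂ) = B
        linear_combination (A+B) * Y^(m+1) * X^(p+1) * hX
    rw [sum_range_succ, key q]
    linear_combination ih

lemma pf (p q : ℕ) (a b w : ℂ) (hab : a ≠ b) (ha : w - a ≠ 0) (hb : w - b ≠ 0) :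
    1 / ((w-a)^(p+1) * (w-b)^(q+1)) =
     ∑ i ∈ range (p+1), ((q+i).choose i : ℂ) * (-1)^i / (a-b)^(q+1+i) / (w-a)^(p-i+1)
     + ∑ j ∈ range (q+1), ((p+j).choose j : ℂ) * (-1)^j / (b-a)^(p+1+j) / (w-b)^(q-j+1) := by
  have h1 : b - a ≠ 0 := sub_ne_zero.2 hab.symm
  have h2 : a - b ≠ 0 := sub_ne_zero.2 hab
  have := pf_poly p q ((w-a)/(b-a)) ((w-b)/(a-b)) (by
    rw [show a - b = -(b-a) by ring, div_neg]; field_simp; ring)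
  have h := congrArg (fun t : ℂ => t / ((w-a)^(p+1) * (w-b)^(q+1))) this
  clear this
  rw [← h, add_div, Finset.sum_div, Finset.sum_div]
  congr 1
  · refine sum_congr rfl fun i hi => ?_
    obtain ⟨k, rfl⟩ := Nat.exists_eq_add_of_le (Nat.lt_succ_iff.1 (mem_range.1 hi))
    rw [show i + k - i = k by omega, show b - a = (-1)*(a-b) by ring, div_pow, div_pow, mul_pow]
    have : ((-1:ℂ)^i) * (-1)^i = 1 := by rw [← mul_pow]; simp
    field_simp
    linear_combination (-(w-a)^(i+k+1) * (q+i).choose i * (a-b)^(q+i+1)) * this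
  · refine sum_congr rfl fun i hi => ?_
    obtain ⟨k, rfl⟩ := Nat.exists_eq_add_of_le (Nat.lt_succ_iff.1 (mem_range.1 hi))
    rw [show i + k - i = k by omega, show a - b = (-1)*(b-a) by ring, div_pow, div_pow, mul_pow]
    have : ((-1:ℂ)^i) * (-1)^i = 1 := by rw [← mul_pow]; simp
    field_simp
    linear_combination (-(w-b)^(i+k+1) * (p+i).choose i * (b-a)^(p+i+1)) * this

lemma cauchy_off (c : ℂ) (R : ℝ) (hR : 0 < R) (U : Set ℂ) (hU : IsOpen U)
    (hUB : Metric.closedBall c R ⊆ U) (z : ℂ) (hz : z ∈ Metric.ball c R) (m : ℕ) :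
    ∀ f : ℂ → ℂ, DifferentiableOn ℂ f U →
    (∮ w in C(c, R), f w / (w - z)^(m+1)) =
      2 * Real.pi * Complex.I * (iteratedDeriv m f z / m.factorial) := by
  induction m with
  | zero =>
    intro f hf
    have := Complex.circleIntegral_div_sub_of_differentiable_on_off_countable (s := ∅) (by simp) hz
      (hf.mono hUB).continuousOn (fun x hx => hf.differentiableAt
        (hU.mem_nhds (hUB (Metric.ball_subset_closedBall hx.1))))
    simpa using this
  | succ m ih =>
    intro f hf
    have hne : ∀ w ∈ Metric.sphere c R, w - z ≠ 0 := by
      intro w hw h0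
      rw [sub_eq_zero.1 h0] at hw
      simp only [Metric.mem_sphere, Metric.mem_ball] at hw hz
      linarith
    have hsU : Metric.sphere c R ⊆ U := Metric.sphere_subset_closedBall.trans hUB
    have hd := hf.deriv hU
    have h0 := circleIntegral.integral_eq_zero_of_hasDerivWithinAt
      (f := fun w => f w / (w-z)^(m+1))
      (f' := fun w => deriv f w / (w-z)^(m+1) - (m+1) * (f w / (w-z)^(m+1+1))) (c := c) hR.le (by
        intro w hw
        have h1 := (hf.differentiableAt (hU.mem_nhds (hsU hw))).hasDerivAt
        have h2 := ((hasDerivAt_id w).sub_const z).pow (m+1)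
        have := hne w hw
        have h3 := h1.div h2 (pow_ne_zero _ this)
        refine (h3.congr_deriv ?_).hasDerivWithinAt
        simp
        field_simp
        ring)
    have ci : ∀ (g : ℂ → ℂ) (k : ℕ), DifferentiableOn ℂ g U →
        CircleIntegrable (fun w => g w / (w-z)^k) c R := by
      intro g k hg
      apply ContinuousOn.circleIntegrable hR.le
      exact (hg.continuousOn.mono hsU).div (by fun_prop) (fun w hw => pow_ne_zero _ (hne w hw))
    have hc : CircleIntegrable (fun w => ((m:ℂ)+1) * (f w / (w-z)^(m+1+1))) c R :=
      (ci f (m+1+1) hf).const_smul (a := ((m:ℂ)+1))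
    rw [circleIntegral.integral_sub (ci _ _ hd) hc,
      circleIntegral.integral_const_mul, ih _ hd] at h0
    rw [iteratedDeriv_succ', Nat.factorial_succ]
    have hm : (m:ℂ)+1 ≠ 0 := by exact_mod_cast Nat.succ_ne_zero m
    apply mul_left_cancel₀ hm
    rw [← sub_eq_zero.1 h0]
    push_cast
    field_simp

end TwoPt

/-- Cauchy integral representation of the two-point Taylor coefficients:
`a_n(z1,z2) = (1/(2πi(z2−z1))) ∮_{|w−c|=R} f(w)/((w−z1)^n (w−z2)^{n+1}) dw`. -/
theorem twoPointCoeff_eq_circleIntegral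
    (c : ℂ) (R : ℝ) (hR : 0 < R) (f : ℂ → ℂ)
    (U : Set ℂ) (hU : IsOpen U) (hUB : Metric.closedBall c R ⊆ U)
    (hf : DifferentiableOn ℂ f U)
    (z1 z2 : ℂ) (hz1 : z1 ∈ Metric.ball c R) (hz2 : z2 ∈ Metric.ball c R)
    (h12 : z1 ≠ z2) (n : ℕ) :
    twoPointCoeff f z1 z2 n =
      (1 / (2 * Real.pi * Complex.I * (z2 - z1))) *
        ∮ w in C(c, R), f w / ((w - z1) ^ n * (w - z2) ^ (n + 1)) := by
  have hpi : (2 * Real.pi * Complex.I : ℂ) ≠ 0 := Complex.two_pi_I_ne_zero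
  have hd12 : z1 - z2 ≠ 0 := sub_ne_zero.2 h12
  have hd21 : z2 - z1 ≠ 0 := sub_ne_zero.2 h12.symm
  have cau := TwoPt.cauchy_off c R hR U hU hUB
  generalize (2 * Real.pi * Complex.I : ℂ) = P at hpi cau ⊢
  rcases n with _ | m
  · have := cau z2 hz2 0 f hf
    simp only [pow_zero, one_mul, this, twoPointCoeff, if_true]
    simp
    field_simp
  have hne : ∀ z ∈ Metric.ball c R, ∀ w ∈ Metric.sphere c R, w - z ≠ 0 := by
    intro z hz w hw h0
    rw [sub_eq_zero.1 h0] at hw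
    simp only [Metric.mem_sphere, Metric.mem_ball] at hw hz
    linarith
  have hsU : Metric.sphere c R ⊆ U := Metric.sphere_subset_closedBall.trans hUB
  have ci : ∀ z ∈ Metric.ball c R, ∀ (a : ℂ) (k : ℕ),
      CircleIntegrable (fun w => a * (f w / (w-z)^k)) c R := by
    intro z hz a k
    apply ContinuousOn.circleIntegrable hR.le
    exact continuousOn_const.mul ((hf.continuousOn.mono hsU).div (by fun_prop)
      (fun w hw => pow_ne_zero _ (hne z hz w hw)))
  have hI : (∮ w in C(c, R), f w / ((w - z1) ^ (m+1) * (w - z2) ^ (m+1+1))) =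
      ∮ w in C(c, R), (∑ i ∈ Finset.range (m+1),
        (((m+1+i).choose i : ℂ) * (-1)^i / (z1-z2)^(m+1+1+i)) * (f w / (w-z1)^(m-i+1))
     + ∑ j ∈ Finset.range (m+1+1),
        (((m+j).choose j : ℂ) * (-1)^j / (z2-z1)^(m+1+j)) * (f w / (w-z2)^(m+1-j+1))) := by
    refine circleIntegral.integral_congr hR.le fun w hw => ?_
    have := TwoPt.pf m (m+1) z1 z2 w h12 (hne z1 hz1 w hw) (hne z2 hz2 w hw)
    rw [div_eq_mul_one_div, this, mul_add, Finset.mul_sum, Finset.mul_sum]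
    congr 1 <;> exact Finset.sum_congr rfl fun i _ => by ring
  have cis : ∀ z ∈ Metric.ball c R, ∀ (a : ℕ → ℂ) (k : ℕ → ℕ) (s : Finset ℕ),
      CircleIntegrable (fun w => ∑ i ∈ s, a i * (f w / (w-z)^(k i))) c R := by
    intro z hz a k s
    exact CircleIntegrable.fun_sum s fun i _ => ci z hz (a i) (k i)
  rw [hI, circleIntegral.integral_add (cis z1 hz1 _ _ _) (cis z2 hz2 _ _ _),
    circleIntegral.integral_fun_sum (fun i _ => ci z1 hz1 _ _),
    circleIntegral.integral_fun_sum (fun i _ => ci z2 hz2 _ _)]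
  simp only [circleIntegral.integral_const_mul, cau z1 hz1 _ f hf, cau z2 hz2 _ f hf]
  rw [twoPointCoeff, if_neg (Nat.succ_ne_zero m)]
  simp only [add_div, mul_add, Finset.sum_add_distrib]
  rw [add_comm]
  congr 1
  · rw [Finset.sum_range_succ', Finset.mul_sum]
    simp only [Nat.cast_zero, mul_zero, zero_mul, zero_div, add_zero]
    refine Finset.sum_congr rfl fun i hi => ?_
    have hfac := Nat.add_choose_mul_factorial_mul_factorial (m+1) i
    rw [show m + 1 + (i+1) - 1 = m+1+i by omega, show m + 1 - (i+1) = m - i by omega,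
      ← hfac, Nat.factorial_succ i, show z2 - z1 = -(z1-z2) by ring]
    have h1 : ((i:ℂ)+1) ≠ 0 := by exact_mod_cast Nat.succ_ne_zero i
    have h2 : (i.factorial : ℂ) ≠ 0 := by exact_mod_cast i.factorial_ne_zero
    have h3 : ((m-i).factorial : ℂ) ≠ 0 := by exact_mod_cast (m-i).factorial_ne_zero
    have h4 : ((m+1).factorial : ℂ) ≠ 0 := by exact_mod_cast (m+1).factorial_ne_zero
    push_cast
    field_simp
    ring
  · rw [Finset.mul_sum]
    refine Finset.sum_congr rfl fun i hi => ?_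
    have hfac := Nat.add_choose_mul_factorial_mul_factorial m i
    rw [show m + 1 + i - 1 = m+i by omega, ← hfac, Nat.factorial_succ m,
      show z2 - z1 = (-1) * (z1-z2) by ring, mul_pow]
    have h1 : ((m:ℂ)+1) ≠ 0 := by exact_mod_cast Nat.succ_ne_zero m
    have h2 : (i.factorial : ℂ) ≠ 0 := by exact_mod_cast i.factorial_ne_zero
    have h3 : ((m+1-i).factorial : ℂ) ≠ 0 := by exact_mod_cast (m+1-i).factorial_ne_zero
    have h4 : (m.factorial : ℂ) ≠ 0 := by exact_mod_cast m.factorial_ne_zero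
    have h5 : ((-1:ℂ)^i) * (-1)^i = 1 := by rw [← mul_pow]; simp
    have h6 : ((-1:ℂ)^m) * (-1)^m = 1 := by rw [← mul_pow]; simp
    push_cast
    field_simp
    linear_combination (-(z1-z2)^(m+i+2) * (-1)^i * (m+i).choose i * iteratedDeriv (m+1-i) f z2) * h6
end
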